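/- arXiv:2407.16003 — 3 statements merged into one kernel-verified Lean document; each statement's English description precedes it below -/
import Mathlib

section
/- Let x be a natural number with 1 ≤ x ≤ 4, let n ≥ 3 + 2x, and let ρ : Fin r → Equiv.Perm (Fin n) be an sggi of rank r = n − x whose generated subgroup G is transitive. If G_j is intransitive for every j ∈ Fin r, then G = ⊤, i.e. G is the full symmetric group Equiv.Perm (Fin n). -/
/-- A string group generated by involutions (sggi): each generator has order 2 and
nonconsecutive generators commute. -/
def IsSggi {n r : ℕ} (ρ : Fin r → Equiv.Perm (Fin n)) : Prop :=
  (∀ i, orderOf (ρ i) = 2) ∧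
  ∀ i j : Fin r, 1 < |((i : ℕ) : ℤ) - ((j : ℕ) : ℤ)| → (ρ i * ρ j) ^ 2 = 1

/-!
Write `O(J)` for the partition into orbits of the generators with label in `J`. Since every
`G_j` is intransitive, each new label merges orbits, so `O(J)` has at least `r + 1 - |J|` classes.
Applied to a block system, this count shows that `G` is primitive as soon as `n < 2r`, so by
Jordan's theorem it suffices that some generator be a transposition.

Suppose none is, and let `J` be a set of labels such that every generator commutes with all but at
most one of those in `J`. If `O(J \ {m}) ⋖ O(J)` for every `m ∈ J`, then the common refinement of
the partitions `O(J \ {m})` is invariant, hence trivial by primitivity. So the two-cycles of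
`ρ m` all merge the same two classes of `O(J \ {m})`, and therefore the orbit under `J` of a point
moved by `J` is closed under every generator and `O(J)` is trivial. Hence, unless `O(J) = ⊤`, some
label of `J` splits off at least two classes; removing such labels one at a time shows that `O(J)`
has at most `n - 2|J|` classes. The two counts give `|J| < n - r`, which fails for the labels
congruent to `0` or `1` modulo `4`: there are at least `r / 2` of them.
-/

section PartitionCounting

variable {α : Type*}

theorem strictAnti_card_quotient [Finite α] :
    StrictAnti fun e : Setoid α => Nat.card (Quotient e) := by
  intro a b hab
  have hsurj : Function.Surjective (Setoid.map_of_le hab.le) := fun q =>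
    q.inductionOn fun x => ⟨Quotient.mk a x, rfl⟩
  refine (Nat.card_le_card_of_surjective _ hsurj).lt_of_ne fun hcard => hab.not_ge fun x y hxy => ?_
  have hinj := (hsurj.bijective_of_nat_card_le hcard.ge).injective
  exact Quotient.exact (@hinj (Quotient.mk a x) (Quotient.mk a y) (Quotient.sound hxy))

theorem card_quotient_pos [Finite α] [Nonempty α] (e : Setoid α) : 0 < Nat.card (Quotient e) :=
  Nat.card_pos_iff.2 ⟨(nonempty_quotient_iff e).2 ‹_›, inferInstance⟩

theorem card_quotient_add_two_le [Finite α] {a b : Setoid α} (hlt : a < b) (hcov : ¬ a ⋖ b) :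
    Nat.card (Quotient b) + 2 ≤ Nat.card (Quotient a) := by
  obtain ⟨c, hac, hcb⟩ := exists_lt_lt_of_not_covBy hlt hcov
  have := strictAnti_card_quotient hac
  have := strictAnti_card_quotient hcb
  lia

theorem card_quotient_mul_of_card_class_eq [Finite α] (e : Setoid α) {m : ℕ}
    (hm : ∀ x, Nat.card {y // e y x} = m) : Nat.card (Quotient e) * m = Nat.card α := by
  have := Fintype.ofFinite (Quotient e)
  have hfiber (q : Quotient e) : Nat.card {y // Quotient.mk e y = q} = m :=
    q.inductionOn fun x =>
      (Nat.card_congr (Equiv.subtypeEquivRight fun _ => Quotient.eq)).trans (hm x)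
  rw [Nat.card_congr (Equiv.sigmaFiberEquiv (Quotient.mk e)).symm, Nat.card_sigma,
    Finset.sum_congr rfl fun q _ => hfiber q, Finset.sum_const, Finset.card_univ,
    Nat.card_eq_fintype_card, smul_eq_mul]

theorem rel_or_rel_of_covBy {a b : Setoid α} (hab : a ⋖ b) {x y c d : α} (hxy : b x y)
    (hxy' : ¬ a x y) (hcd : b c d) (hcd' : ¬ a c d) : a x c ∨ a x d := by
  classical
  -- `merged` fuses the `a`-classes of `x` and `y`; it contains `b` because `a ⋖ b`.
  let merged : Setoid α := Setoid.ker fun p => if a p y then Quotient.mk a x else Quotient.mk a p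
  have ha : a ≤ merged := fun p q hpq => by
    have hy : a p y ↔ a q y := ⟨a.trans (a.symm hpq), a.trans hpq⟩
    simp only [merged, Setoid.ker_def, hy, Quotient.sound hpq]
  have hb : b ≤ merged := by
    rcases hab.eq_or_eq (le_inf hab.le ha) inf_le_left with h | h
    · refine absurd ?_ hxy'
      rw [← h]
      exact ⟨hxy, by simp [merged, Setoid.ker_def, hxy']⟩
    · exact inf_eq_left.1 h
  have hmerged : (if a c y then Quotient.mk a x else Quotient.mk a c) =
      if a d y then Quotient.mk a x else Quotient.mk a d := hb hcd
  split_ifs at hmerged with hc hd hd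
  · exact absurd (a.trans hc (a.symm hd)) hcd'
  · exact Or.inr (Quotient.exact hmerged)
  · exact Or.inl (a.symm (Quotient.exact hmerged))
  · exact absurd (Quotient.exact hmerged) hcd'

end PartitionCounting

section OrbitPartition

variable {ι α : Type*}

/-- The partition `O(J)` of `α` into orbits of the subgroup generated by the permutations `ρ j`
with `j ∈ J`. -/
def genOrbitRel (ρ : ι → Equiv.Perm α) (J : Set ι) : Setoid α :=
  MulAction.orbitRel (Subgroup.closure (ρ '' J)) α

/-- No generator `ρ k` can be omitted without changing the orbits: the orbits of `ρ k` are not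
contained in those of the other generators. For a transitive group this says that every subgroup
generated by all but one of the generators is intransitive. -/
def OrbitIrredundant (ρ : ι → Equiv.Perm α) : Prop :=
  ∀ k, ¬ genOrbitRel ρ {k} ≤ genOrbitRel ρ {k}ᶜ

/-- The partition `e` is permuted by every generator, hence is a system of blocks for the group
they generate (when that group is transitive). -/
def IsInvariantPartition (ρ : ι → Equiv.Perm α) (e : Setoid α) : Prop :=
  ∀ k x y, e (ρ k x) (ρ k y) ↔ e x y

variable {ρ : ι → Equiv.Perm α} {J K : Set ι}

theorem genOrbitRel_iff {x y : α} :
    genOrbitRel ρ J x y ↔ ∃ g ∈ Subgroup.closure (ρ '' J), g x = y := by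
  rw [Setoid.comm', genOrbitRel, MulAction.orbitRel_apply, MulAction.mem_orbit_iff]
  exact ⟨fun ⟨g, h⟩ => ⟨g, g.2, h⟩, fun ⟨g, hg, h⟩ => ⟨⟨g, hg⟩, h⟩⟩

theorem genOrbitRel_apply {j : ι} (hj : j ∈ J) (x : α) : genOrbitRel ρ J x (ρ j x) :=
  genOrbitRel_iff.2 ⟨ρ j, Subgroup.subset_closure (Set.mem_image_of_mem ρ hj), rfl⟩

theorem genOrbitRel_le_iff {e : Setoid α} :
    genOrbitRel ρ J ≤ e ↔ ∀ j ∈ J, ∀ x, e x (ρ j x) := by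
  refine ⟨fun h j hj x => h (genOrbitRel_apply hj x), fun h x y hxy => ?_⟩
  obtain ⟨g, hg, rfl⟩ := genOrbitRel_iff.1 hxy
  induction hg using Subgroup.closure_induction generalizing x with
  | mem g hg => obtain ⟨j, hj, rfl⟩ := hg; exact h j hj x
  | one => exact e.refl x
  | mul a b ha hb iha ihb =>
    exact e.trans (ihb x (genOrbitRel_iff.2 ⟨b, hb, rfl⟩))
      (iha (b x) (genOrbitRel_iff.2 ⟨a, ha, rfl⟩))
  | inv a ha ih =>
    simpa using e.symm (ih (a⁻¹ x) (genOrbitRel_iff.2 ⟨a, ha, rfl⟩))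

theorem genOrbitRel_mono (h : J ⊆ K) : genOrbitRel ρ J ≤ genOrbitRel ρ K :=
  genOrbitRel_le_iff.2 fun _ hj => genOrbitRel_apply (h hj)

theorem genOrbitRel_union : genOrbitRel ρ (J ∪ K) = genOrbitRel ρ J ⊔ genOrbitRel ρ K := by
  refine le_antisymm (genOrbitRel_le_iff.2 fun j hj x => ?_)
    (sup_le (genOrbitRel_mono Set.subset_union_left) (genOrbitRel_mono Set.subset_union_right))
  exact hj.elim (fun h => le_sup_left (a := genOrbitRel ρ J) (genOrbitRel_apply h x))
    fun h => le_sup_right (b := genOrbitRel ρ K) (genOrbitRel_apply h x)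

theorem apply_eq_of_genOrbitRel {β : Type*} {f : α → β} (hf : ∀ j ∈ J, ∀ x, f (ρ j x) = f x)
    {x y : α} (hxy : genOrbitRel ρ J x y) : f x = f y :=
  genOrbitRel_le_iff (e := Setoid.ker f).2 (fun j hj x => (hf j hj x).symm) hxy

theorem eq_of_genOrbitRel_of_fixed {x y : α} (hxy : genOrbitRel ρ J x y)
    (hx : ∀ j ∈ J, ρ j x = x) : y = x := by
  refine (apply_eq_of_genOrbitRel (f := (· = x)) (fun j hj z => ?_) hxy).mp rfl
  rw [eq_iff_iff, ← (ρ j).apply_eq_iff_eq (x := z), hx j hj]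

theorem genOrbitRel_eq_top_iff :
    genOrbitRel ρ J = ⊤ ↔ MulAction.IsPretransitive (Subgroup.closure (ρ '' J)) α := by
  rw [Setoid.eq_top_iff, MulAction.isPretransitive_iff]
  simp only [genOrbitRel_iff, Subtype.exists, Subgroup.mk_smul, Equiv.Perm.smul_def, exists_prop]

/-! ### Counting orbits of irredundant generators -/

theorem OrbitIrredundant.exists_apply_ne (hirr : OrbitIrredundant ρ) (k : ι) :
    ∃ x, ρ k x ≠ x := by
  by_contra! hfix
  refine hirr k (genOrbitRel_le_iff.2 fun j hj x => ?_)
  rw [Set.mem_singleton_iff.1 hj, hfix x]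

theorem orbitIrredundant_of_not_isPretransitive
    (htop : genOrbitRel ρ Set.univ = ⊤)
    (hint : ∀ k, ¬ MulAction.IsPretransitive (Subgroup.closure (ρ '' {k}ᶜ)) α) :
    OrbitIrredundant ρ := by
  intro k hk
  refine hint k (genOrbitRel_eq_top_iff.1 ?_)
  rw [← htop, ← Set.union_compl_self {k}, genOrbitRel_union, sup_eq_right.2 hk]

theorem OrbitIrredundant.genOrbitRel_sdiff_lt (hirr : OrbitIrredundant ρ) {k : ι} (hk : k ∈ J) :
    genOrbitRel ρ (J \ {k}) < genOrbitRel ρ J := by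
  refine lt_of_le_not_ge (genOrbitRel_mono Set.sdiff_subset) fun hle => hirr k ?_
  calc genOrbitRel ρ {k} ≤ genOrbitRel ρ J := genOrbitRel_mono (Set.singleton_subset_iff.2 hk)
    _ ≤ genOrbitRel ρ (J \ {k}) := hle
    _ ≤ genOrbitRel ρ {k}ᶜ := genOrbitRel_mono fun _ hj => hj.2

theorem card_quotient_sup_genOrbitRel_add_card_le [Finite α] [DecidableEq ι] (e : Setoid α)
    (K : Finset ι) (h : ∀ k ∈ K, ¬ genOrbitRel ρ {k} ≤ e ⊔ genOrbitRel ρ (K.erase k)) :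
    Nat.card (Quotient (e ⊔ genOrbitRel ρ K)) + K.card ≤ Nat.card (Quotient e) := by
  induction K using Finset.induction_on with
  | empty => simpa using strictAnti_card_quotient.antitone le_sup_left
  | insert k K hk ih =>
    have hmono {A B : Finset ι} (hAB : A ⊆ B) : e ⊔ genOrbitRel ρ A ≤ e ⊔ genOrbitRel ρ B :=
      sup_le_sup_left (genOrbitRel_mono (Finset.coe_subset.2 hAB)) e
    have hlt : e ⊔ genOrbitRel ρ K < e ⊔ genOrbitRel ρ (insert k K : Finset ι) := by
      refine lt_of_le_not_ge (hmono (Finset.subset_insert k K)) fun hle => ?_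
      refine h k (Finset.mem_insert_self k K) ?_
      rw [Finset.erase_insert hk]
      exact (genOrbitRel_mono (by simp)).trans (le_sup_right.trans hle)
    have hcard := strictAnti_card_quotient hlt
    have hK := ih fun j hj hle => h j (Finset.mem_insert_of_mem hj)
      (hle.trans (hmono (Finset.erase_subset_erase j (Finset.subset_insert k K))))
    rw [Finset.card_insert_of_notMem hk]
    lia

theorem OrbitIrredundant.card_add_one_le [Finite α] [Nonempty α] [Fintype ι]
    (hirr : OrbitIrredundant ρ) (J : Finset ι) :
    Fintype.card ι + 1 ≤ Nat.card (Quotient (genOrbitRel ρ J)) + J.card := by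
  classical
  have hmerge := card_quotient_sup_genOrbitRel_add_card_le (genOrbitRel ρ J) Jᶜ fun k hk hle => by
    refine hirr k (hle.trans (sup_le (genOrbitRel_mono ?_) (genOrbitRel_mono (by simp))))
    exact Set.subset_compl_singleton_iff.2 (Finset.mem_compl.1 hk)
  have := card_quotient_pos (genOrbitRel ρ J ⊔ genOrbitRel ρ (Jᶜ : Finset ι))
  have := J.card_add_card_compl
  lia

theorem exists_finset_sup_genOrbitRel_eq_top [Finite α] [Nonempty α] [Finite ι]
    (htop : genOrbitRel ρ Set.univ = ⊤) (e : Setoid α) :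
    ∃ J : Finset ι, e ⊔ genOrbitRel ρ J = ⊤ ∧ J.card + 1 ≤ Nat.card (Quotient e) := by
  classical
  have := Fintype.ofFinite ι
  obtain ⟨J, hJ, hmin⟩ := exists_minimal_of_wellFoundedLT
    (fun J : Finset ι => e ⊔ genOrbitRel ρ J = ⊤)
    ⟨Finset.univ, by rw [Finset.coe_univ, htop, sup_top_eq]⟩
  refine ⟨J, hJ, ?_⟩
  have hmerge := card_quotient_sup_genOrbitRel_add_card_le (ρ := ρ) e J fun k hk hle => by
    have hunion : (J : Set ι) = ↑(J.erase k) ∪ {k} := by simp [hk]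
    have hJk : e ⊔ genOrbitRel ρ (J.erase k) = ⊤ := by
      rw [← hJ, hunion, genOrbitRel_union, ← sup_assoc, sup_eq_left.2 hle]
    exact Finset.notMem_erase k J (hmin hJk (Finset.erase_subset k J) hk)
  have := card_quotient_pos (e ⊔ genOrbitRel ρ J)
  lia

/-! ### Primitivity -/

namespace IsInvariantPartition

variable {e : Setoid α}

theorem rel_apply_iff (he : IsInvariantPartition ρ e) {g : Equiv.Perm α}
    (hg : g ∈ Subgroup.closure (ρ '' J)) (x y : α) : e (g x) (g y) ↔ e x y := by
  induction hg using Subgroup.closure_induction generalizing x y with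
  | mem g hg => obtain ⟨j, -, rfl⟩ := hg; exact he j x y
  | one => rfl
  | mul a b _ _ iha ihb => exact (iha (b x) (b y)).trans (ihb x y)
  | inv a _ ih => simpa using (ih (a⁻¹ x) (a⁻¹ y)).symm

/-- An invariant partition permutes with the orbit partitions, so no longer chains are needed. -/
theorem exists_of_sup_genOrbitRel (he : IsInvariantPartition ρ e) {x y : α}
    (hxy : (e ⊔ genOrbitRel ρ J) x y) : ∃ z, e z x ∧ genOrbitRel ρ J z y := by
  have hstep {c d : α} (hcd : e c d) :
      (∃ z, e z x ∧ genOrbitRel ρ J z c) → ∃ z, e z x ∧ genOrbitRel ρ J z d := by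
    rintro ⟨z, hz, hzc⟩
    obtain ⟨g, hg, rfl⟩ := genOrbitRel_iff.1 hzc
    have hgd : g (g⁻¹ d) = d := g.apply_symm_apply d
    refine ⟨g⁻¹ d, Setoid.trans' e ?_ hz, genOrbitRel_iff.2 ⟨g, hg, hgd⟩⟩
    rw [← he.rel_apply_iff hg, hgd]
    exact e.symm hcd
  have hle : e ⊔ genOrbitRel ρ J ≤ Setoid.ker fun c => ∃ z, e z x ∧ genOrbitRel ρ J z c := by
    refine sup_le (fun c d hcd => propext ⟨hstep hcd, hstep (e.symm hcd)⟩) ?_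
    refine fun c d hcd => propext (exists_congr fun z => and_congr_right fun _ => ?_)
    exact ⟨fun h => Setoid.trans' _ h hcd, fun h => Setoid.trans' _ h (Setoid.symm' _ hcd)⟩
  exact (hle hxy).mp ⟨x, e.refl x, Setoid.refl' _ x⟩

theorem card_quotient_genOrbitRel_le_card_class [Finite α] (he : IsInvariantPartition ρ e)
    (hJ : e ⊔ genOrbitRel ρ J = ⊤) (x : α) :
    Nat.card (Quotient (genOrbitRel ρ J)) ≤ Nat.card {y // e y x} := by
  refine Nat.card_le_card_of_surjective (fun y => Quotient.mk _ y.1) fun q =>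
    q.inductionOn fun c => ?_
  obtain ⟨z, hz, hzc⟩ := he.exists_of_sup_genOrbitRel (Setoid.eq_top_iff.1 hJ x c)
  exact ⟨⟨z, hz⟩, Quotient.sound hzc⟩

theorem card_quotient_mul_card_class [Finite α] (he : IsInvariantPartition ρ e)
    (htop : genOrbitRel ρ Set.univ = ⊤) (x : α) :
    Nat.card (Quotient e) * Nat.card {y // e y x} = Nat.card α := by
  refine card_quotient_mul_of_card_class_eq e fun z => ?_
  obtain ⟨g, hg, rfl⟩ := genOrbitRel_iff.1 (Setoid.eq_top_iff.1 htop z x)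
  exact Nat.card_congr (g.subtypeEquiv fun y => (he.rel_apply_iff hg y z).symm)

theorem eq_bot_or_eq_top [Finite α] [Fintype ι] (he : IsInvariantPartition ρ e)
    (htop : genOrbitRel ρ Set.univ = ⊤) (hirr : OrbitIrredundant ρ)
    (hcard : Nat.card α < 2 * Fintype.card ι) : e = ⊥ ∨ e = ⊤ := by
  by_contra! hne
  obtain ⟨x, y, hyx, hxy⟩ : ∃ x y, e y x ∧ x ≠ y := by
    by_contra! hbot
    exact hne.1 (le_bot_iff.1 fun y x h => (hbot x y h).symm)
  have : Nonempty α := ⟨x⟩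
  have hblocks : 2 ≤ Nat.card (Quotient e) := by
    have := strictAnti_card_quotient (lt_top_iff_ne_top.2 hne.2)
    have := card_quotient_pos (⊤ : Setoid α)
    lia
  have hsize : 2 ≤ Nat.card {y // e y x} :=
    Finite.one_lt_card_iff_nontrivial.2 ⟨⟨x, e.refl x⟩, ⟨y, hyx⟩, fun h => hxy (congrArg (·.1) h)⟩
  have hsum : Fintype.card ι + 2 ≤ Nat.card (Quotient e) + Nat.card {y // e y x} := by
    obtain ⟨J, hJ, hJcard⟩ := exists_finset_sup_genOrbitRel_eq_top htop e
    have := he.card_quotient_genOrbitRel_le_card_class hJ x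
    have := hirr.card_add_one_le J
    lia
  -- From `(k - 2) * (m - 2) ≥ 0`, where `k` blocks of size `m` make up `α`.
  have hprod := he.card_quotient_mul_card_class htop x
  nlinarith

end IsInvariantPartition

theorem isPreprimitive_of_forall_setoid {G X : Type*} [Group G] [MulAction G X]
    [MulAction.IsPretransitive G X]
    (h : ∀ e : Setoid X, (∀ (g : G) x y, e x y → e (g • x) (g • y)) → e = ⊥ ∨ e = ⊤) :
    MulAction.IsPreprimitive G X where
  isTrivialBlock_of_isBlock {B} hB := by
    let e : Setoid X := Setoid.ker fun x => {g : G | g • x ∈ B}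
    have he : ∀ (g : G) x y, e x y → e (g • x) (g • y) := fun g x y hxy => Set.ext fun g' => by
      simpa only [Set.mem_ofPred_eq, mul_smul] using Set.ext_iff.1 hxy (g' * g)
    have hsub {g : G} {x y : X} (hx : x ∈ B) (hy : y ∈ B) (hgx : g • x ∈ B) : g • y ∈ B :=
      MulAction.isBlock_iff_smul_eq_of_mem.1 hB hx hgx ▸ Set.smul_mem_smul_set hy
    have hB_rel {x y : X} (hx : x ∈ B) (hy : y ∈ B) : e x y :=
      Set.ext fun g => ⟨hsub hx hy, hsub hy hx⟩
    rcases h e he with hbot | htop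
    · exact Or.inl fun x hx y hy => (hbot ▸ hB_rel hx hy : (⊥ : Setoid X) x y)
    · rcases B.eq_empty_or_nonempty with rfl | ⟨x, hx⟩
      · exact Or.inl Set.subsingleton_empty
      · refine Or.inr (Set.eq_univ_of_forall fun y => ?_)
        simpa [hx] using Set.ext_iff.1 (Setoid.eq_top_iff.1 htop x y) 1

theorem isPreprimitive_closure_range (htop : genOrbitRel ρ Set.univ = ⊤)
    (hprim : ∀ e : Setoid α, IsInvariantPartition ρ e → e = ⊥ ∨ e = ⊤) :
    MulAction.IsPreprimitive (Subgroup.closure (Set.range ρ)) α := by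
  have : MulAction.IsPretransitive (Subgroup.closure (Set.range ρ)) α :=
    Set.image_univ (f := ρ) ▸ genOrbitRel_eq_top_iff.1 htop
  refine isPreprimitive_of_forall_setoid fun e he => hprim e fun k x y => ?_
  let g : Subgroup.closure (Set.range ρ) := ⟨ρ k, Subgroup.subset_closure ⟨k, rfl⟩⟩
  exact ⟨fun h => by simpa [g, Subgroup.smul_def] using he g⁻¹ _ _ h, he g x y⟩

/-! ### Generating sets with few noncommuting pairs -/

/-- Every generator commutes with all but at most one of the generators with label in `J`. For a
string of generators this holds when no two labels in `J` have a common neighbour. -/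
def AlmostCommuting (ρ : ι → Equiv.Perm α) (J : Set ι) : Prop :=
  ∀ h, {j ∈ J | ¬ Commute (ρ h) (ρ j)}.Subsingleton

theorem AlmostCommuting.mono (hJ : AlmostCommuting ρ J) (h : K ⊆ J) : AlmostCommuting ρ K :=
  fun i => (hJ i).anti fun _ hj => ⟨h hj.1, hj.2⟩

theorem AlmostCommuting.exists_forall_commute (hJ : AlmostCommuting ρ J) (hne : J.Nonempty)
    (h : ι) : ∃ l ∈ J, ∀ j ∈ J \ {l}, Commute (ρ h) (ρ j) := by
  by_cases hall : ∀ j ∈ J, Commute (ρ h) (ρ j)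
  · obtain ⟨l, hl⟩ := hne
    exact ⟨l, hl, fun j hj => hall j hj.1⟩
  · push Not at hall
    obtain ⟨l, hl, hlh⟩ := hall
    exact ⟨l, hl, fun j hj => by_contra fun hjh => hj.2 (hJ h ⟨hj.1, hjh⟩ ⟨hl, hlh⟩)⟩

theorem perm_apply_comm_of_commute {f g : Equiv.Perm α} (h : Commute f g) (x : α) :
    f (g x) = g (f x) :=
  Equiv.Perm.ext_iff.1 h.eq x

theorem genOrbitRel_apply_apply_of_commute {h : ι} (hcomm : ∀ j ∈ J, Commute (ρ h) (ρ j))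
    {x y : α} (hxy : genOrbitRel ρ J x y) : genOrbitRel ρ J (ρ h x) (ρ h y) := by
  refine genOrbitRel_le_iff (e := (genOrbitRel ρ J).comap (ρ h)).2 (fun j hj z => ?_) hxy
  rw [Setoid.comap_rel, perm_apply_comm_of_commute (hcomm j hj)]
  exact genOrbitRel_apply hj _

theorem genOrbitRel_sdiff_or_of_commute {h : ι} (hinv : Function.Involutive (ρ h))
    (hcomm : ∀ j ∈ J, Commute (ρ h) (ρ j)) {x y : α} (hxy : genOrbitRel ρ J x y) :
    genOrbitRel ρ (J \ {h}) x y ∨ genOrbitRel ρ (J \ {h}) (ρ h x) y := by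
  set a := genOrbitRel ρ (J \ {h})
  have hconst : (a x y ∨ a (ρ h x) y) = (a y y ∨ a (ρ h y) y) := by
    refine apply_eq_of_genOrbitRel (f := fun z => a z y ∨ a (ρ h z) y) (fun j hj z => ?_) hxy
    rcases eq_or_ne j h with rfl | hjh
    · simp only [hinv z, or_comm]
    · have hstep (w : α) : a w (ρ j w) := genOrbitRel_apply (J := J \ {h}) ⟨hj, hjh⟩ w
      have hj' (w : α) : a (ρ j w) y ↔ a w y :=
        ⟨Setoid.trans' a (hstep w), Setoid.trans' a (Setoid.symm' a (hstep w))⟩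
      simp only [perm_apply_comm_of_commute (hcomm j hj), hj']
  exact hconst.mpr (Or.inl (a.refl y))

theorem genOrbitRel_compl_apply_apply {h : ι} (hinv : Function.Involutive (ρ h))
    (hcomm : ∀ j ∈ J, Commute (ρ h) (ρ j)) {x y : α} (hxy : genOrbitRel ρ J x y)
    (hxy' : genOrbitRel ρ {h}ᶜ x y) : genOrbitRel ρ {h}ᶜ (ρ h x) (ρ h y) := by
  have hle : genOrbitRel ρ (J \ {h}) ≤ genOrbitRel ρ {h}ᶜ := genOrbitRel_mono fun _ hj => hj.2
  have hcomm' : ∀ j ∈ J \ {h}, Commute (ρ h) (ρ j) := fun j hj => hcomm j hj.1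
  rcases genOrbitRel_sdiff_or_of_commute hinv hcomm hxy with hx | hx
  · exact hle (genOrbitRel_apply_apply_of_commute hcomm' hx)
  · have hx' := genOrbitRel_apply_apply_of_commute hcomm' hx
    rw [hinv x] at hx'
    exact Setoid.trans' _ (hle hx) (Setoid.trans' _ (Setoid.symm' _ hxy') (hle hx'))

/-! ### Labels whose removal splits off a single class -/

/-- The partition obtained from `O(J)` by separating points in different orbits of some `G_m`,
`m ∈ J`. When `O(J \ {m}) ⋖ O(J)` for all `m ∈ J`, it is the common refinement of the
partitions `O(J \ {m})`. -/
def separatedOrbitRel (ρ : ι → Equiv.Perm α) (J : Set ι) : Setoid α :=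
  genOrbitRel ρ J ⊓ ⨅ m ∈ J, genOrbitRel ρ {m}ᶜ

theorem separatedOrbitRel_iff {x y : α} :
    separatedOrbitRel ρ J x y ↔
      genOrbitRel ρ J x y ∧ ∀ m ∈ J, genOrbitRel ρ {m}ᶜ x y := by
  rw [separatedOrbitRel, ← sInf_image, Setoid.inf_iff_and]
  exact and_congr_right fun _ => Set.forall_mem_image

theorem genOrbitRel_inf_compl_le_of_covBy (hirr : OrbitIrredundant ρ) {m : ι} (hm : m ∈ J)
    (hcov : genOrbitRel ρ (J \ {m}) ⋖ genOrbitRel ρ J) :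
    genOrbitRel ρ J ⊓ genOrbitRel ρ {m}ᶜ ≤ genOrbitRel ρ (J \ {m}) := by
  have hle : genOrbitRel ρ (J \ {m}) ≤ genOrbitRel ρ J ⊓ genOrbitRel ρ {m}ᶜ :=
    le_inf (genOrbitRel_mono Set.sdiff_subset) (genOrbitRel_mono fun _ hj => hj.2)
  refine ((hcov.eq_or_eq hle inf_le_left).resolve_right fun h => hirr m ?_).le
  exact (genOrbitRel_mono (Set.singleton_subset_iff.2 hm)).trans (inf_eq_left.1 h)

theorem isInvariantPartition_separatedOrbitRel (hinv : ∀ k, Function.Involutive (ρ k))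
    (hirr : OrbitIrredundant ρ) (hne : J.Nonempty) (hJ : AlmostCommuting ρ J)
    (hcov : ∀ m ∈ J, genOrbitRel ρ (J \ {m}) ⋖ genOrbitRel ρ J) :
    IsInvariantPartition ρ (separatedOrbitRel ρ J) := by
  have hforward (h : ι) {x y : α} (hxy : separatedOrbitRel ρ J x y) :
      separatedOrbitRel ρ J (ρ h x) (ρ h y) := by
    rw [separatedOrbitRel_iff] at hxy ⊢
    obtain ⟨l, hl, hcomm⟩ := hJ.exists_forall_commute hne h
    have hxyl : genOrbitRel ρ (J \ {l}) x y :=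
      genOrbitRel_inf_compl_le_of_covBy hirr hl (hcov l hl) ⟨hxy.1, hxy.2 l hl⟩
    refine ⟨(hcov l hl).le (genOrbitRel_apply_apply_of_commute hcomm hxyl), fun m hm => ?_⟩
    rcases eq_or_ne h m with rfl | hhm
    · exact genOrbitRel_compl_apply_apply (hinv h) hcomm hxyl (hxy.2 h hm)
    · exact Setoid.trans' _ (Setoid.symm' _ (genOrbitRel_apply hhm x))
        (Setoid.trans' _ (hxy.2 m hm) (genOrbitRel_apply hhm y))
  exact fun h x y => ⟨fun hxy => by simpa only [hinv h _] using hforward h hxy, hforward h⟩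

theorem separatedOrbitRel_ne_top (hirr : OrbitIrredundant ρ) (hne : J.Nonempty) :
    separatedOrbitRel ρ J ≠ ⊤ := by
  obtain ⟨m, hm⟩ := hne
  intro htop
  refine hirr m (le_top.trans (htop.ge.trans ?_))
  exact inf_le_right.trans (iInf₂_le m hm)

theorem not_genOrbitRel_sdiff_apply (hsep : separatedOrbitRel ρ J = ⊥) {m : ι} (hm : m ∈ J)
    {x : α} (hx : ρ m x ≠ x) : ¬ genOrbitRel ρ (J \ {m}) x (ρ m x) := by
  intro hxm
  have hrel : separatedOrbitRel ρ J x (ρ m x) := by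
    refine separatedOrbitRel_iff.2 ⟨genOrbitRel_apply hm x, fun l _ => ?_⟩
    rcases eq_or_ne m l with rfl | hml
    · exact genOrbitRel_mono (fun _ hj => hj.2) hxm
    · exact genOrbitRel_apply hml x
  rw [hsep] at hrel
  exact hx hrel.symm

theorem genOrbitRel_sdiff_or_of_apply_ne (hsep : separatedOrbitRel ρ J = ⊥) {m : ι} (hm : m ∈ J)
    (hcov : genOrbitRel ρ (J \ {m}) ⋖ genOrbitRel ρ J) {x y : α} (hx : ρ m x ≠ x)
    (hy : ρ m y ≠ y) :
    genOrbitRel ρ (J \ {m}) x y ∨ genOrbitRel ρ (J \ {m}) x (ρ m y) :=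
  rel_or_rel_of_covBy hcov (genOrbitRel_apply hm x) (not_genOrbitRel_sdiff_apply hsep hm hx)
    (genOrbitRel_apply hm y) (not_genOrbitRel_sdiff_apply hsep hm hy)

theorem genOrbitRel_of_apply_ne (hsep : separatedOrbitRel ρ J = ⊥) {m : ι} (hm : m ∈ J)
    (hcov : genOrbitRel ρ (J \ {m}) ⋖ genOrbitRel ρ J) {x y : α} (hx : ρ m x ≠ x)
    (hy : ρ m y ≠ y) : genOrbitRel ρ J x y := by
  rcases genOrbitRel_sdiff_or_of_apply_ne hsep hm hcov hx hy with h | h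
  · exact hcov.le h
  · exact Setoid.trans' _ (hcov.le h) (Setoid.symm' _ (genOrbitRel_apply hm y))

theorem exists_apply_ne_of_not_isSwap [DecidableEq α] {f : Equiv.Perm α}
    (hf : Function.Involutive f) (hswap : ¬ f.IsSwap) {x : α} (hx : f x ≠ x) :
    ∃ z, f z ≠ z ∧ z ≠ x ∧ z ≠ f x := by
  by_contra! hfix
  refine hswap ⟨x, f x, hx.symm, Equiv.Perm.ext fun z => ?_⟩
  rcases eq_or_ne z x with rfl | hzx
  · rw [Equiv.swap_apply_left]
  rcases eq_or_ne z (f x) with rfl | hzfx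
  · rw [Equiv.swap_apply_right, hf x]
  rw [Equiv.swap_apply_of_ne_of_ne hzx hzfx]
  exact by_contra fun hz => hzfx (hfix z hz hzx)

theorem genOrbitRel_apply_of_moved [DecidableEq α] (hinv : ∀ k, Function.Involutive (ρ k))
    (hswap : ∀ k, ¬ (ρ k).IsSwap) (hJ : AlmostCommuting ρ J)
    (hcov : ∀ m ∈ J, genOrbitRel ρ (J \ {m}) ⋖ genOrbitRel ρ J)
    (hsep : separatedOrbitRel ρ J = ⊥) {x : α} (hx : ∃ m ∈ J, ρ m x ≠ x) (h : ι) :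
    genOrbitRel ρ J x (ρ h x) := by
  by_cases hcomm : ∃ m ∈ J, ρ m x ≠ x ∧ Commute (ρ h) (ρ m)
  · obtain ⟨m, hm, hmx, hhm⟩ := hcomm
    refine genOrbitRel_of_apply_ne hsep hm (hcov m hm) hmx ?_
    rwa [← perm_apply_comm_of_commute hhm, (ρ h).injective.ne_iff]
  · push Not at hcomm
    obtain ⟨m, hm, hmx⟩ := hx
    have hfix : ∀ j ∈ J \ {m}, ρ j x = x := fun j hj => by_contra fun hjx =>
      hj.2 (hJ h ⟨hj.1, hcomm j hj.1 hjx⟩ ⟨hm, hcomm m hm hmx⟩)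
    -- Another two-cycle of `ρ m` would have to meet the singleton class `{x}` of `O(J \ {m})`.
    obtain ⟨z, hz, hzx, hzmx⟩ := exists_apply_ne_of_not_isSwap (hinv m) (hswap m) hmx
    rcases genOrbitRel_sdiff_or_of_apply_ne hsep hm (hcov m hm) hmx hz with hxz | hxz
    · exact absurd (eq_of_genOrbitRel_of_fixed hxz hfix) hzx
    · refine absurd ?_ hzmx
      rw [← eq_of_genOrbitRel_of_fixed hxz hfix, hinv m z]

theorem genOrbitRel_eq_top_of_covBy [DecidableEq α] (hinv : ∀ k, Function.Involutive (ρ k))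
    (htop : genOrbitRel ρ Set.univ = ⊤) (hirr : OrbitIrredundant ρ)
    (hswap : ∀ k, ¬ (ρ k).IsSwap) (hne : J.Nonempty) (hJ : AlmostCommuting ρ J)
    (hcov : ∀ m ∈ J, genOrbitRel ρ (J \ {m}) ⋖ genOrbitRel ρ J)
    (hsep : separatedOrbitRel ρ J = ⊥) : genOrbitRel ρ J = ⊤ := by
  obtain ⟨m, hm⟩ := hne
  obtain ⟨v, hv⟩ := hirr.exists_apply_ne m
  have hclosed (h : ι) {x : α} (hx : genOrbitRel ρ J v x) : genOrbitRel ρ J v (ρ h x) := by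
    refine Setoid.trans' _ hx (genOrbitRel_apply_of_moved hinv hswap hJ hcov hsep ?_ h)
    by_contra! hfix
    obtain rfl := eq_of_genOrbitRel_of_fixed (Setoid.symm' _ hx) hfix
    exact hv (hfix m hm)
  have hv_all (x : α) : genOrbitRel ρ J v x := by
    have hvx : genOrbitRel ρ Set.univ v x := Setoid.eq_top_iff.1 htop v x
    refine (apply_eq_of_genOrbitRel (f := fun x => genOrbitRel ρ J v x)
      (fun h _ x => propext ⟨fun hx => ?_, hclosed h⟩) hvx).mp (Setoid.refl' _ v)
    simpa only [hinv h x] using hclosed h hx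
  exact Setoid.eq_top_iff.2 fun x y => Setoid.trans' _ (Setoid.symm' _ (hv_all x)) (hv_all y)

theorem exists_not_covBy [DecidableEq α] (hinv : ∀ k, Function.Involutive (ρ k))
    (htop : genOrbitRel ρ Set.univ = ⊤) (hirr : OrbitIrredundant ρ)
    (hprim : ∀ e : Setoid α, IsInvariantPartition ρ e → e = ⊥ ∨ e = ⊤)
    (hswap : ∀ k, ¬ (ρ k).IsSwap) (hne : J.Nonempty) (hJ : AlmostCommuting ρ J)
    (hJtop : genOrbitRel ρ J ≠ ⊤) :
    ∃ m ∈ J, ¬ genOrbitRel ρ (J \ {m}) ⋖ genOrbitRel ρ J := by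
  by_contra! hcov
  have hsep : separatedOrbitRel ρ J = ⊥ :=
    (hprim _ (isInvariantPartition_separatedOrbitRel hinv hirr hne hJ hcov)).resolve_right
      (separatedOrbitRel_ne_top hirr hne)
  exact hJtop (genOrbitRel_eq_top_of_covBy hinv htop hirr hswap hne hJ hcov hsep)

theorem two_mul_card_add_card_quotient_le [Finite α] [DecidableEq α]
    (hinv : ∀ k, Function.Involutive (ρ k)) (htop : genOrbitRel ρ Set.univ = ⊤)
    (hirr : OrbitIrredundant ρ)
    (hprim : ∀ e : Setoid α, IsInvariantPartition ρ e → e = ⊥ ∨ e = ⊤)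
    (hswap : ∀ k, ¬ (ρ k).IsSwap) (J : Finset ι) (hJ : AlmostCommuting ρ (J : Set ι))
    (hJtop : genOrbitRel ρ J ≠ ⊤) :
    2 * J.card + Nat.card (Quotient (genOrbitRel ρ J)) ≤ Nat.card α := by
  classical
  induction J using Finset.strongInduction with
  | H J ih =>
    rcases J.eq_empty_or_nonempty with rfl | hne
    · simpa using Nat.card_le_card_of_surjective _ Quotient.mk_surjective
    · obtain ⟨m, hm, hcov⟩ := exists_not_covBy hinv htop hirr hprim hswap hne hJ hJtop
      have hsplit := card_quotient_add_two_le (hirr.genOrbitRel_sdiff_lt hm) hcov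
      have hsub : (↑(J.erase m) : Set ι) ⊆ J := Finset.coe_subset.2 (J.erase_subset m)
      have herase := ih (J.erase m) (Finset.erase_ssubset hm) (hJ.mono hsub)
        (ne_top_of_le_ne_top hJtop (genOrbitRel_mono hsub))
      rw [Finset.coe_erase] at herase
      have := Finset.card_erase_add_one hm
      lia

end OrbitPartition

/-! ### String groups -/

section StringGroup

/-- The labels congruent to `0` or `1` modulo `4`: at least half of all labels, and no two of them
differ by exactly two. -/
def sparseLabels (r : ℕ) : Finset (Fin r) :=
  {i | (i : ℕ) % 4 < 2}

theorem mem_sparseLabels {r : ℕ} {i : Fin r} : i ∈ sparseLabels r ↔ (i : ℕ) % 4 < 2 :=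
  Finset.mem_filter_univ i

theorem le_two_mul_card_sparseLabels (r : ℕ) : r ≤ 2 * (sparseLabels r).card := by
  have hshift : (sparseLabels r)ᶜ.card ≤ (sparseLabels r).card := by
    refine Finset.card_le_card_of_injOn (fun i => ⟨i - 2, by lia⟩) (fun i hi => ?_)
      fun i hi j hj hij => ?_
    · simp only [Finset.mem_coe, Finset.mem_compl, mem_sparseLabels] at hi ⊢
      lia
    · simp only [Finset.mem_coe, Finset.mem_compl, mem_sparseLabels, Fin.mk.injEq] at hi hj hij
      lia
  have := (sparseLabels r).card_add_card_compl
  rw [Fintype.card_fin] at this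
  lia

variable {α : Type*} {r : ℕ} {ρ : Fin r → Equiv.Perm α}

theorem almostCommuting_sparseLabels
    (hcomm : ∀ i j : Fin r, (i : ℕ) + 1 < j → Commute (ρ i) (ρ j)) :
    AlmostCommuting ρ (sparseLabels r : Set (Fin r)) := by
  have hadj {h j : Fin r} (hhj : ¬ Commute (ρ h) (ρ j)) : (j : ℕ) = h + 1 ∨ (h : ℕ) = j + 1 := by
    have hne : h ≠ j := fun heq => hhj (heq ▸ Commute.refl _)
    have := mt (hcomm h j) hhj
    have := mt (hcomm j h) (mt Commute.symm hhj)
    lia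
  rintro h i ⟨hi, hhi⟩ j ⟨hj, hhj⟩
  have := hadj hhi
  have := hadj hhj
  rw [Finset.mem_coe, mem_sparseLabels] at hi hj
  lia

theorem stmt3_general [Finite α] (hr : 3 ≤ r) (hcard : 2 * Nat.card α ≤ 3 * r + 1)
    (hinv : ∀ i, Function.Involutive (ρ i))
    (hcomm : ∀ i j : Fin r, (i : ℕ) + 1 < j → Commute (ρ i) (ρ j))
    (htrans : MulAction.IsPretransitive (Subgroup.closure (Set.range ρ)) α)
    (hint : ∀ j, ¬ MulAction.IsPretransitive (Subgroup.closure (ρ '' {j}ᶜ)) α) :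
    Subgroup.closure (Set.range ρ) = ⊤ := by
  classical
  have htop : genOrbitRel ρ Set.univ = ⊤ := genOrbitRel_eq_top_iff.2 (by rwa [Set.image_univ])
  have hirr := orbitIrredundant_of_not_isPretransitive htop hint
  have hprim (e : Setoid α) (he : IsInvariantPartition ρ e) : e = ⊥ ∨ e = ⊤ :=
    he.eq_bot_or_eq_top htop hirr (by rw [Fintype.card_fin]; lia)
  by_contra hG
  have hswap (l : Fin r) (hl : (ρ l).IsSwap) : False :=
    hG (Equiv.Perm.subgroup_eq_top_of_isPreprimitive_of_isSwap_mem
      (isPreprimitive_closure_range htop hprim) (ρ l) hl (Subgroup.subset_closure ⟨l, rfl⟩))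
  have hproper : genOrbitRel ρ (sparseLabels r) ≠ ⊤ := by
    intro hsparse
    refine hirr ⟨2, by lia⟩ (le_top.trans (hsparse.ge.trans (genOrbitRel_mono ?_)))
    simp [mem_sparseLabels]
  have hupper := two_mul_card_add_card_quotient_le hinv htop hirr hprim hswap (sparseLabels r)
    (almostCommuting_sparseLabels hcomm) hproper
  have : Nonempty α := ⟨(hirr.exists_apply_ne ⟨0, by lia⟩).choose⟩
  have hlower := hirr.card_add_one_le (sparseLabels r)
  have := le_two_mul_card_sparseLabels r
  rw [Fintype.card_fin] at hlower
  lia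

end StringGroup

namespace IsSggi

variable {n r : ℕ} {ρ : Fin r → Equiv.Perm (Fin n)}

theorem involutive (h : IsSggi ρ) (i : Fin r) : Function.Involutive (ρ i) := by
  have hsq := pow_orderOf_eq_one (ρ i)
  rw [h.1 i, pow_two] at hsq
  exact Equiv.Perm.ext_iff.1 hsq

theorem commute (h : IsSggi ρ) {i j : Fin r} (hij : (i : ℕ) + 1 < j) : Commute (ρ i) (ρ j) := by
  have hself (k : Fin r) : (ρ k)⁻¹ = ρ k :=
    inv_eq_of_mul_eq_one_left (Equiv.Perm.ext (h.involutive k))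
  have hsq := h.2 i j (by rw [lt_abs]; lia)
  rwa [pow_two, mul_eq_one_iff_eq_inv, mul_inv_rev, hself, hself] at hsq

end IsSggi

theorem stmt3 {n r x : ℕ} (hx1 : 1 ≤ x) (hx4 : x ≤ 4) (hn : 3 + 2 * x ≤ n)
    (hr : r = n - x) (ρ : Fin r → Equiv.Perm (Fin n)) (hsggi : IsSggi ρ)
    (htrans : MulAction.IsPretransitive ↥(Subgroup.closure (Set.range ρ)) (Fin n))
    (hint : ∀ j : Fin r, ¬ MulAction.IsPretransitive
      ↥(Subgroup.closure (ρ '' {l | l ≠ j})) (Fin n)) :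
    Subgroup.closure (Set.range ρ) = ⊤ :=
  stmt3_general (by lia) (by rw [Nat.card_fin]; lia) hsggi.involutive
    (fun _ _ => hsggi.commute) htrans hint
end

section
/- Let n ≥ 7. There exists exactly one faithful transitive permutation representation of the symmetric group of degree n on 2n points; equivalently: there exists a subgroup H of Equiv.Perm (Fin n) with Subgroup.index H = 2 * n and Subgroup.normalCore H = ⊥, and for any two subgroups H, K of Equiv.Perm (Fin n) with index 2n and trivial normal core there exists g ∈ Equiv.Perm (Fin n) such that K = Subgroup.map (MulAut.conj g).toMonoidHom H. -/
/-!
The point stabilizers `Aₙ₋₁` of the alternating group have index `2n` and trivial normal core, and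
they form a single conjugacy class. They are the only subgroups `H ≤ Sₙ` of index `2n`.

A subgroup `H` of such small index contains a 3-cycle, by an argument of Bochert: if not, then a
base of minimal size would have at most `n / 2` points, since otherwise two elements of `H` would
have supports meeting in a single point, and their commutator would be a 3-cycle; the pointwise
stabilizer of the base in `Sₙ` meets `H` trivially, so the index of `H` would be too large.

If `H` were intransitive without fixed points, some orbit would have size `k` with `2 ≤ k ≤ n - 2`;
but `H` stabilizes it, so `n.choose k ∣ 2n`, which is impossible. If `H` were transitive, a
nontrivial block would have size `a ≥ 3` because of the 3-cycle, and the `Sₙ`-orbit of the block, of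
size `n.choose a`, would be too large compared with its `H`-orbit, of size `n / a`. So `H` would be
primitive and contain `Aₙ` by Jordan's theorem, hence have index at most 2. Therefore `H` fixes a
point `x`, and it has index 2 in the stabilizer of `x`, which is a symmetric group.
-/

open Equiv Equiv.Perm MulAction
open scoped Pointwise Nat commutatorElement

section Arithmetic

theorem choose_le_choose_of_add_le {n j k : ℕ} (hjk : j ≤ k) (hn : j + k ≤ n) :
    n.choose j ≤ n.choose k := by
  induction n generalizing j k with
  | zero => simp [show j = 0 by omega, show k = 0 by omega]
  | succ n ih =>
    rcases j with _ | j
    · rw [Nat.choose_zero_right]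
      exact Nat.choose_pos (by omega)
    obtain ⟨k, rfl⟩ : ∃ i, k = i + 1 := ⟨k - 1, by omega⟩
    rcases hn.eq_or_lt with heq | hlt
    · exact (Nat.choose_symm_of_eq_add heq.symm).le
    · rw [Nat.choose_succ_succ, Nat.choose_succ_succ]
      exact Nat.add_le_add (ih (by omega) (by omega)) (ih hjk (by omega))

theorem four_mul_lt_factorial {m : ℕ} (hm : 4 ≤ m) : 4 * m < m ! := by
  induction m, hm using Nat.le_induction with
  | base => decide
  | succ m hm ih =>
    rw [Nat.factorial_succ]
    nlinarith

theorem two_mul_lt_choose_two {n : ℕ} (hn : 6 ≤ n) : 2 * n < n.choose 2 := by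
  induction n, hn using Nat.le_induction with
  | base => decide
  | succ n hn ih =>
    have pascal : (n + 1).choose 2 = n.choose 1 + n.choose 2 := Nat.choose_succ_succ' n 1
    rw [pascal, Nat.choose_one_right]
    omega

theorem two_mul_mul_lt_choose {n a b : ℕ} (hn : 7 ≤ n) (ha : 3 ≤ a) (hb : 2 ≤ b)
    (hab : a * b = n) : 2 * n * b < n.choose a := by
  have choose_three_le : n.choose 3 ≤ n.choose a := choose_le_choose_of_add_le ha (by nlinarith)
  have six_mul_choose_three : 6 * n.choose 3 = (n - 2) * ((n - 1) * n) := by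
    simpa [Nat.descFactorial, Nat.factorial] using
      (Nat.descFactorial_eq_factorial_mul_choose n 3).symm
  have three_mul_le : 3 * b ≤ n := hab ▸ Nat.mul_le_mul_right b ha
  obtain ⟨m, rfl⟩ : ∃ m, n = m + 2 := ⟨n - 2, by omega⟩
  have four_mul_lt : 4 * (m + 2) < m * (m + 1) := by nlinarith
  have : (m + 2) * (4 * (m + 2)) < 6 * (m + 2).choose 3 := by
    rw [six_mul_choose_three]
    calc (m + 2) * (4 * (m + 2)) < (m + 2) * (m * (m + 1)) := by gcongr
      _ = m * ((m + 1) * (m + 2)) := by ring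
  nlinarith

end Arithmetic

section GroupActions

variable {G X : Type*} [Group G] [MulAction G X]

theorem ncard_orbit_dvd_index_mul_ncard_orbit (H : Subgroup G) (x : X) :
    (orbit G x).ncard ∣ H.index * (orbit H x).ncard := by
  have relIndex_eq : (stabilizer G x).relIndex H = (orbit H x).ncard := index_stabilizer H x
  rw [← index_stabilizer, ← relIndex_eq, mul_comm, ← Subgroup.inf_relIndex_right,
    Subgroup.relIndex_mul_index inf_le_right]
  exact Subgroup.index_dvd_of_le inf_le_left

theorem normalCore_eq_bot_of_le_stabilizer [IsPretransitive G X] [FaithfulSMul G X]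
    {H : Subgroup G} {x : X} (hH : H ≤ stabilizer G x) : H.normalCore = ⊥ := by
  refine (Subgroup.eq_bot_iff_forall _).mpr fun g hg ↦ eq_of_smul_eq_smul fun y : X ↦ ?_
  obtain ⟨a, rfl⟩ := exists_smul_eq G x y
  have conj_fixes : (a⁻¹ * g * a) • x = x := hH (by simpa using hg a⁻¹)
  rwa [mul_smul, mul_smul, inv_smul_eq_iff, ← one_smul G (a • x), smul_smul g, mul_one]
    at conj_fixes

theorem map_conj_inf_stabilizer (N : Subgroup G) [N.Normal] (g : G) (x : X) :
    (N ⊓ stabilizer G x).map (MulAut.conj g).toMonoidHom = N ⊓ stabilizer G (g • x) := by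
  rw [Subgroup.map_inf _ _ _ (MulAut.conj g).injective, stabilizer_smul_eq_stabilizer_map_conj]
  exact congrArg (· ⊓ _) (Subgroup.Normal.map_conj_eq N g)

end GroupActions

section SetOrbits

variable {α : Type*} [Finite α]

theorem ncard_orbit_perm_set (s : Set α) :
    (orbit (Perm α) s).ncard = (Nat.card α).choose s.ncard := by
  classical
  obtain ⟨t, rfl⟩ := s.toFinite.exists_finset_coe
  have := Set.powersetCard.isPretransitive (α := α) (n := t.card)
  let t' : Set.powersetCard α t.card := Set.powersetCard.ofCard rfl
  calc (orbit (Perm α) (t : Set α)).ncard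
      = (stabilizer (Perm α) (t : Set α)).index := (index_stabilizer _ _).symm
    _ = (stabilizer (Perm α) t').index := by
      rw [Set.powersetCard.stabilizer_coe]
      rfl
    _ = (Nat.card α).choose (t : Set α).ncard := by
      rw [index_stabilizer_of_transitive, Set.powersetCard.card, Set.ncard_coe_finset]

theorem choose_ncard_dvd_index_mul_ncard_orbit (H : Subgroup (Perm α)) (s : Set α) :
    (Nat.card α).choose s.ncard ∣ H.index * (orbit H s).ncard :=
  ncard_orbit_perm_set s ▸ ncard_orbit_dvd_index_mul_ncard_orbit H s

theorem choose_ncard_orbit_dvd_index (H : Subgroup (Perm α)) (x : α) :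
    (Nat.card α).choose (orbit H x).ncard ∣ H.index := by
  have orbit_orbit : orbit H (orbit H x) = {orbit H x} := by
    ext s
    simp [mem_orbit_iff, eq_comm]
  simpa [orbit_orbit] using choose_ncard_dvd_index_mul_ncard_orbit H (orbit H x)

theorem exists_le_stabilizer_of_index_lt_choose_two {H : Subgroup (Perm α)}
    (hH : H.index < (Nat.card α).choose 2) (hH' : ¬ IsPretransitive H α) :
    ∃ x : α, H ≤ stabilizer (Perm α) x := by
  by_contra! no_fixed
  have two_le_ncard_orbit (x : α) : 2 ≤ (orbit H x).ncard := by
    obtain ⟨g, hgH, hgx⟩ := SetLike.not_le_iff_exists.mp (no_fixed x)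
    exact (Set.one_lt_ncard).mpr ⟨g x, ⟨⟨g, hgH⟩, rfl⟩, x, mem_orbit_self x, hgx⟩
  obtain ⟨x, y, hxy⟩ : ∃ x y : α, y ∉ orbit H x := by
    contrapose! hH'
    exact ⟨hH'⟩
  have orbits_disjoint : Disjoint (orbit H x) (orbit H y) :=
    (orbit.eq_or_disjoint x y).resolve_left fun h ↦ hxy (h ▸ mem_orbit_self y)
  have ncard_add_ncard_le : (orbit H x).ncard + (orbit H y).ncard ≤ Nat.card α :=
    Set.ncard_union_eq orbits_disjoint ▸ Set.ncard_le_card _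
  have choose_two_le : (Nat.card α).choose 2 ≤ (Nat.card α).choose (orbit H x).ncard :=
    choose_le_choose_of_add_le (two_le_ncard_orbit x) (by grind)
  have choose_le_index := Nat.le_of_dvd (Nat.pos_of_ne_zero Subgroup.index_ne_zero_of_finite)
    (choose_ncard_orbit_dvd_index H x)
  omega

end SetOrbits

section Bases

variable {α : Type*}

/-- A base of a permutation group `H`: a set of points whose pointwise stabilizer in `H` is
trivial. -/
def IsBase (H : Subgroup (Perm α)) (s : Set α) : Prop :=
  ∀ h ∈ H, (∀ x ∈ s, h x = x) → h = 1

theorem isBase_univ (H : Subgroup (Perm α)) : IsBase H Set.univ :=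
  fun _ _ h ↦ Equiv.ext fun x ↦ h x (Set.mem_univ x)

theorem IsBase.factorial_le_index [Finite α] {H : Subgroup (Perm α)} {s : Set α}
    (hs : IsBase H s) : (Nat.card α - s.ncard)! ≤ H.index := by
  let F := fixingSubgroup (Perm α) s
  have inf_eq_bot : H ⊓ F = ⊥ := (Subgroup.eq_bot_iff_forall _).mpr fun h ⟨hH, hF⟩ ↦
    hs h hH ((mem_fixingSubgroup_iff _).mp hF)
  have card_F : Nat.card F = (Nat.card α - s.ncard)! := by
    have index_mul := (isMultiplyPretransitive α s.ncard).index_of_fixingSubgroup_mul rfl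
    rw [← Nat.card_perm, ← F.index_mul_card] at index_mul
    exact (Nat.eq_of_mul_eq_mul_left (Nat.pos_of_ne_zero Subgroup.index_ne_zero_of_finite)
      index_mul).symm
  calc (Nat.card α - s.ncard)! = H.relIndex F := by
        rw [← card_F, ← Subgroup.relIndex_bot_left, ← inf_eq_bot, Subgroup.inf_relIndex_right]
    _ ≤ H.relIndex ⊤ := Subgroup.relIndex_le_of_le_right le_top
        (Subgroup.relIndex_top_right H ▸ Subgroup.index_ne_zero_of_finite)
    _ = H.index := Subgroup.relIndex_top_right H

end Bases

section ThreeCycles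

variable {α : Type*} [Fintype α] [DecidableEq α]

theorem isThreeCycle_commutator {g h : Perm α} {a : α} (hgh : g.support ∩ h.support = {a}) :
    IsThreeCycle ⁅g, h⁆ := by
  have moved_iff (x : α) : g x ≠ x ∧ h x ≠ x ↔ x = a := by
    rw [← mem_support, ← mem_support, ← Finset.mem_inter, hgh, Finset.mem_singleton]
  obtain ⟨hga, hha⟩ := (moved_iff a).mpr rfl
  have h_fixes : h (g a) = g a := by grind [g.injective.eq_iff]
  have g_fixes : g (h a) = h a := by grind [h.injective.eq_iff]
  have g_ne_h : h a ≠ g a := fun e ↦ hha (g.injective (g_fixes.trans e))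
  have comm_of_ne (x : α) (hx : x ≠ a) (hgx : g x ≠ a) (hhx : h x ≠ a) : g (h x) = h (g x) := by
    grind [g.injective.eq_iff, h.injective.eq_iff]
  suffices ⁅g, h⁆ = swap a (h a) * swap a (g a) from
    this ▸ isThreeCycle_swap_mul_swap_same hha.symm hga.symm g_ne_h
  rw [commutatorElement_def, mul_inv_eq_iff_eq_mul, mul_inv_eq_iff_eq_mul]
  ext x
  simp only [Perm.mul_apply]
  grind [g.injective.eq_iff, h.injective.eq_iff]

theorem exists_isThreeCycle_mem_of_isBase {H : Subgroup (Perm α)} {s : Set α} (hs : IsBase H s)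
    (hsc : ¬ IsBase H sᶜ) (hsd : ∀ a ∈ s, ¬ IsBase H (s \ {a})) : ∃ g ∈ H, IsThreeCycle g := by
  simp only [IsBase, not_forall, Set.mem_compl_iff] at hsc
  obtain ⟨g, hgH, g_fixes, g_ne_one⟩ := hsc
  obtain ⟨a, hga⟩ : ∃ a, g a ≠ a := by
    contrapose! g_ne_one
    exact Equiv.ext g_ne_one
  have has : a ∈ s := by
    contrapose! hga
    exact g_fixes a hga
  specialize hsd a has
  simp only [IsBase, not_forall] at hsd
  obtain ⟨h, hhH, h_fixes, h_ne_one⟩ := hsd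
  have hha : h a ≠ a := by
    contrapose! h_ne_one
    exact hs h hhH fun x hx ↦ by grind
  have support_inter : g.support ∩ h.support = {a} := by
    ext x
    simp only [Finset.mem_inter, mem_support, Finset.mem_singleton]
    grind
  exact ⟨⁅g, h⁆, H.mul_mem (H.mul_mem (H.mul_mem hgH hhH) (H.inv_mem hgH)) (H.inv_mem hhH),
    isThreeCycle_commutator support_inter⟩

theorem exists_isBase_two_mul_ncard_le {H : Subgroup (Perm α)} (hH : ∀ g ∈ H, ¬ IsThreeCycle g) :
    ∃ s : Set α, IsBase H s ∧ 2 * s.ncard ≤ Nat.card α := by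
  obtain ⟨s, hs, minimal⟩ :=
    exists_minimalFor_of_wellFoundedLT (IsBase H) Set.ncard ⟨Set.univ, isBase_univ H⟩
  have not_isBase {t : Set α} (ht : t.ncard < s.ncard) : ¬ IsBase H t :=
    fun h ↦ ht.not_ge (minimal h ht.le)
  have isBase_compl : IsBase H sᶜ := by
    by_contra hsc
    obtain ⟨g, hgH, hg⟩ := exists_isThreeCycle_mem_of_isBase hs hsc
      fun a ha ↦ not_isBase (Set.ncard_sdiff_singleton_lt_of_mem ha)
    exact hH g hgH hg
  have ncard_le_ncard_compl : s.ncard ≤ sᶜ.ncard := not_lt.mp fun h ↦ not_isBase h isBase_compl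
  refine ⟨s, hs, ?_⟩
  rw [← Set.ncard_add_ncard_compl s]
  omega

theorem exists_isThreeCycle_mem_of_index_lt_factorial {H : Subgroup (Perm α)}
    (hH : H.index < ((Nat.card α + 1) / 2)!) : ∃ g ∈ H, IsThreeCycle g := by
  by_contra! no_threeCycle
  obtain ⟨s, hs, two_mul_ncard_le⟩ := exists_isBase_two_mul_ncard_le no_threeCycle
  exact hH.not_ge ((Nat.factorial_le (by omega)).trans hs.factorial_le_index)

theorem subsingleton_or_support_subset_of_isBlock {G : Subgroup (Perm α)} {c : Perm α}
    (hcG : c ∈ G) (hc : IsThreeCycle c) {B : Set α} (hB : IsBlock G B) {x : α} (hxB : x ∈ B)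
    (hx : x ∈ c.support) : B.Subsingleton ∨ (c.support : Set α) ⊆ B := by
  rcases hB.smul_eq_or_disjoint ⟨c, hcG⟩ with smul_eq | disjoint
  · right
    have map_mem {y : α} (hy : y ∈ B) : c y ∈ B :=
      smul_eq ▸ Set.smul_mem_smul_set (a := (⟨c, hcG⟩ : G)) hy
    rw [hc.support_eq_iff_mem_support.mpr hx]
    simp [Set.insert_subset_iff, hxB, map_mem (map_mem hxB), map_mem hxB]
  · left
    have map_notMem {y : α} (hy : y ∈ B) : c y ∉ B := fun hcy ↦
      Set.disjoint_left.mp disjoint (Set.smul_mem_smul_set (a := (⟨c, hcG⟩ : G)) hy) hcy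
    have union_subset : B ∪ (⟨c, hcG⟩ : G) • B ⊆ c.support := by
      rintro _ (hy | ⟨y, hy, rfl⟩)
      · exact mem_support.mpr fun e ↦ map_notMem hy (e.symm ▸ hy)
      · exact apply_mem_support.mpr (mem_support.mpr fun e ↦ map_notMem hy (e.symm ▸ hy))
    have two_mul_ncard_le := Set.ncard_le_ncard union_subset
    rw [Set.ncard_union_eq disjoint.symm, Set.ncard_smul_set, Set.ncard_coe_finset,
      hc.card_support] at two_mul_ncard_le
    exact Set.ncard_le_one_iff_subsingleton.mp (by omega)

theorem three_le_ncard_of_isBlock {G : Subgroup (Perm α)} [IsPretransitive G α] {c : Perm α}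
    (hcG : c ∈ G) (hc : IsThreeCycle c) {B : Set α} (hB : IsBlock G B) (hB' : B.Nontrivial) :
    3 ≤ B.ncard := by
  obtain ⟨x, hx⟩ := hc.isCycle.nonempty_support
  obtain ⟨y, hy⟩ := hB'.nonempty
  obtain ⟨g, rfl⟩ := exists_smul_eq G y x
  rw [← Set.ncard_smul_set g B, ← hc.card_support, ← Set.ncard_coe_finset]
  refine Set.ncard_le_ncard ((subsingleton_or_support_subset_of_isBlock hcG hc (hB.translate g)
    (Set.smul_mem_smul_set hy) hx).resolve_left ?_)
  rw [← Set.ncard_le_one_iff_subsingleton, Set.ncard_smul_set,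
    Set.ncard_le_one_iff_subsingleton]
  exact Set.not_subsingleton_iff.mpr hB'

end ThreeCycles

section SmallIndex

variable {α : Type*} {H : Subgroup (Perm α)}

theorem exists_isThreeCycle_mem_of_index_le [Fintype α] [DecidableEq α] (hα : 7 ≤ Nat.card α)
    (hH : H.index ≤ 2 * Nat.card α) : ∃ g ∈ H, IsThreeCycle g := by
  apply exists_isThreeCycle_mem_of_index_lt_factorial
  have := four_mul_lt_factorial (m := (Nat.card α + 1) / 2) (by omega)
  omega

theorem isPreprimitive_of_index_le [Finite α] [IsPretransitive H α] (hα : 7 ≤ Nat.card α)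
    (hH : H.index ≤ 2 * Nat.card α) : IsPreprimitive H α := by
  classical
  have := Fintype.ofFinite α
  refine ⟨fun {B} hB ↦ ?_⟩
  by_contra nontrivial
  simp only [IsTrivialBlock, not_or, Set.not_subsingleton_iff] at nontrivial
  obtain ⟨hB_nontrivial, hB_ne_univ⟩ := nontrivial
  have ncard_mul := hB.ncard_block_mul_ncard_orbit_eq hB_nontrivial.nonempty
  have three_le_ncard : 3 ≤ B.ncard := by
    obtain ⟨c, hcH, hc⟩ := exists_isThreeCycle_mem_of_index_le hα hH
    exact three_le_ncard_of_isBlock hcH hc hB hB_nontrivial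
  have two_le_ncard_orbit : 2 ≤ (orbit H B).ncard := by
    by_contra!
    have := Set.ncard_lt_card hB_ne_univ
    nlinarith
  have choose_le : (Nat.card α).choose B.ncard ≤ H.index * (orbit H B).ncard :=
    Nat.le_of_dvd (Nat.mul_pos (Nat.pos_of_ne_zero Subgroup.index_ne_zero_of_finite) (by omega))
      (choose_ncard_dvd_index_mul_ncard_orbit H B)
  have lt_choose := two_mul_mul_lt_choose hα three_le_ncard two_le_ncard_orbit ncard_mul
  exact (choose_le.trans (Nat.mul_le_mul_right _ hH)).not_gt lt_choose

theorem alternatingGroup_le_or_exists_le_stabilizer [Fintype α] [DecidableEq α]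
    (hα : 7 ≤ Nat.card α) (hH : H.index ≤ 2 * Nat.card α) :
    alternatingGroup α ≤ H ∨ ∃ x : α, H ≤ stabilizer (Perm α) x := by
  by_cases transitive : IsPretransitive H α
  · left
    obtain ⟨c, hcH, hc⟩ := exists_isThreeCycle_mem_of_index_le hα hH
    exact alternatingGroup_le_of_isPreprimitive_of_isThreeCycle_mem
      (isPreprimitive_of_index_le hα hH) hc hcH
  · right
    exact exists_le_stabilizer_of_index_lt_choose_two
      (hH.trans_lt (two_mul_lt_choose_two (by omega))) transitive

end SmallIndex

section PointStabilizers

variable {α : Type*} [DecidableEq α]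

theorem range_ofSubtype_ne (x : α) :
    (ofSubtype : Perm {y // y ≠ x} →* Perm α).range = stabilizer (Perm α) x := by
  ext σ
  rw [mem_stabilizer_iff, Perm.smul_def]
  constructor
  · rintro ⟨τ, rfl⟩
    exact ofSubtype_apply_of_not_mem τ (not_not.mpr rfl)
  · intro hσ
    have σ_apply_ne (y : α) : σ y ≠ x ↔ y ≠ x := by
      rw [← σ.injective.ne_iff (x := y) (y := x), hσ]
    exact ⟨σ.subtypePerm σ_apply_ne,
      ofSubtype_subtypePerm σ_apply_ne fun y hy hyx ↦ hy (hyx ▸ hσ)⟩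

theorem index_comap_ofSubtype_mul_card {K : Subgroup (Perm α)} {x : α}
    (hK : K ≤ stabilizer (Perm α) x) :
    (K.comap (ofSubtype : Perm {y // y ≠ x} →* Perm α)).index * Nat.card α = K.index := by
  rw [Subgroup.index_comap, range_ofSubtype_ne, ← Subgroup.relIndex_mul_index hK,
    index_stabilizer_of_transitive]

variable [Fintype α]

theorem comap_ofSubtype_alternatingGroup_inf_stabilizer (x : α) :
    (alternatingGroup α ⊓ stabilizer (Perm α) x).comap
      (ofSubtype : Perm {y // y ≠ x} →* Perm α) = alternatingGroup {y // y ≠ x} := by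
  rw [← range_ofSubtype_ne]
  ext σ
  simp [mem_alternatingGroup]

theorem index_alternatingGroup_inf_stabilizer (hα : 3 ≤ Nat.card α) (x : α) :
    (alternatingGroup α ⊓ stabilizer (Perm α) x).index = 2 * Nat.card α := by
  have : Nontrivial {y // y ≠ x} := by
    have card_ne : Nat.card {y // y ≠ x} = Nat.card α - 1 := by simp
    exact Finite.one_lt_card_iff_nontrivial.mp (by omega)
  rw [← index_comap_ofSubtype_mul_card inf_le_right,
    comap_ofSubtype_alternatingGroup_inf_stabilizer, alternatingGroup.index_eq_two]

theorem eq_alternatingGroup_inf_stabilizer_of_index_eq {H : Subgroup (Perm α)} {x : α}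
    (hHx : H ≤ stabilizer (Perm α) x) (hH : H.index = 2 * Nat.card α) :
    H = alternatingGroup α ⊓ stabilizer (Perm α) x := by
  let f : Perm {y // y ≠ x} →* Perm α := ofSubtype
  have map_comap {K : Subgroup (Perm α)} (hK : K ≤ stabilizer (Perm α) x) :
      (K.comap f).map f = K :=
    Subgroup.map_comap_eq_self ((range_ofSubtype_ne x).symm ▸ hK)
  have index_comap : (H.comap f).index = 2 := by
    have : Nonempty α := ⟨x⟩
    exact Nat.eq_of_mul_eq_mul_right Nat.card_pos ((index_comap_ofSubtype_mul_card hHx).trans hH)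
  calc H = (H.comap f).map f := (map_comap hHx).symm
    _ = ((alternatingGroup α ⊓ stabilizer (Perm α) x).comap f).map f := by
      rw [eq_alternatingGroup_of_index_eq_two index_comap,
        ← comap_ofSubtype_alternatingGroup_inf_stabilizer]
    _ = alternatingGroup α ⊓ stabilizer (Perm α) x := map_comap inf_le_right

theorem exists_eq_alternatingGroup_inf_stabilizer {H : Subgroup (Perm α)}
    (hα : 7 ≤ Nat.card α) (hH : H.index = 2 * Nat.card α) :
    ∃ x : α, H = alternatingGroup α ⊓ stabilizer (Perm α) x := by
  rcases alternatingGroup_le_or_exists_le_stabilizer hα hH.le with alternating_le | ⟨x, hx⟩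
  · have : Nontrivial α := Finite.one_lt_card_iff_nontrivial.mp (by omega)
    have index_le := Nat.le_of_dvd two_pos
      (alternatingGroup.index_eq_two (α := α) ▸ Subgroup.index_dvd_of_le alternating_le)
    omega
  · exact ⟨x, eq_alternatingGroup_inf_stabilizer_of_index_eq hx hH⟩

end PointStabilizers

theorem stmt4_general {α : Type*} [Finite α] (hα : 7 ≤ Nat.card α) :
    (∃ H : Subgroup (Perm α), H.index = 2 * Nat.card α ∧ H.normalCore = ⊥) ∧
    ∀ H K : Subgroup (Perm α), H.index = 2 * Nat.card α → K.index = 2 * Nat.card α →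
      ∃ g : Perm α, K = H.map (MulAut.conj g).toMonoidHom := by
  classical
  have := Fintype.ofFinite α
  constructor
  · obtain ⟨x⟩ : Nonempty α := Finite.card_pos_iff.mp (by omega)
    exact ⟨alternatingGroup α ⊓ stabilizer (Perm α) x,
      index_alternatingGroup_inf_stabilizer (by omega) x,
      normalCore_eq_bot_of_le_stabilizer inf_le_right⟩
  · intro H K hH hK
    obtain ⟨x, rfl⟩ := exists_eq_alternatingGroup_inf_stabilizer hα hH
    obtain ⟨y, rfl⟩ := exists_eq_alternatingGroup_inf_stabilizer hα hK
    refine ⟨swap x y, ?_⟩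
    rw [map_conj_inf_stabilizer, Perm.smul_def, swap_apply_left]

theorem stmt4 {n : ℕ} (hn : 7 ≤ n) :
    (∃ H : Subgroup (Equiv.Perm (Fin n)),
      H.index = 2 * n ∧ H.normalCore = ⊥) ∧
    ∀ H K : Subgroup (Equiv.Perm (Fin n)),
      H.index = 2 * n → H.normalCore = ⊥ →
      K.index = 2 * n → K.normalCore = ⊥ →
      ∃ g : Equiv.Perm (Fin n),
        K = Subgroup.map (MulAut.conj g).toMonoidHom H := by
  obtain ⟨existence, uniqueness⟩ := Nat.card_fin n ▸ stmt4_general (α := Fin n) (by simpa using hn)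
  exact ⟨existence, fun H K hH _ hK _ ↦ uniqueness H K hH hK⟩
end

section
/- Let ρ : Fin r → Equiv.Perm (Fin n) be a string C-group with transitive generated subgroup G, in the general block setup with m = 4 blocks of size k = n/4, with index sets L and C as specified. If the block action is isomorphic to the Klein four group, i.e. the image of φ has cardinality 4 and every element of the image of φ has square equal to 1, then the cardinality of C is at most n/4 − 1. -/
/-- A string C-group: an sggi satisfying the intersection property. -/
def IsStringC {n r : ℕ} (ρ : Fin r → Equiv.Perm (Fin n)) : Prop :=
  IsSggi ρ ∧ ∀ J K : Set (Fin r),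
    Subgroup.closure (ρ '' J) ⊓ Subgroup.closure (ρ '' K) =
      Subgroup.closure (ρ '' (J ∩ K))

/-!
Since the block action is a Klein four-group, `L = {l₁, l₂}` and `D = ⟨ρ l₁, ρ l₂⟩` is dihedral and
transitive on the blocks; with `c = ρ l₁ * ρ l₂`, its elements fixing every block form `⟨c ^ 2⟩`.
The group generated by the `ρ i` with `i ∈ C` centralizes `D`, so it permutes the `D`-orbits, whose
number `q` is at most `k = n / 4` because each of them meets every block.

* From a string of permutations of `q` points one can delete some members so that the number of
  deleted members plus the size of any independent family in the group generated by the others is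
  at most `q - 1`: use induction along orbits, and when two commuting subgroups generated by the
  ends of the string are transitive, their orders, hence their independent families, are small.
* By the intersection property, the elements of the centralizing group that fix every `D`-orbit
  form a subgroup `N` with `N ⊓ D = ⊥`. No element of `N` moves the blocks like `c`, so a subgroup
  of index at most two fixes every block. An element of the latter is determined by the images of
  one point from each `D`-orbit, which leaves at most `2 ^ (k - q)` possibilities. Unless `N` is
  trivial, `c ^ 2` makes this strict: it is itself such an element outside `N`, or its square is
  nontrivial and some `D`-orbit meets the block in at least three points. So
  `|N| < 2 ^ (k - q + 1)`, and independent families in `N` have at most `k - q` members.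

The two contributions add up to at most `k - 1`.
-/

open Subgroup

section Independence

variable {ι κ G H K : Type*} [Group G] [Group H] [Group K]

/-- A family of group elements none of which lies in the subgroup generated by the other members. -/
def IndependentFamily (x : ι → G) : Prop :=
  ∀ i, x i ∉ closure (x '' {i}ᶜ)

namespace IndependentFamily

variable {x : ι → G}

theorem of_map (f : G →* H) (h : IndependentFamily (f ∘ x)) : IndependentFamily x := by
  intro i hi
  apply h i
  rw [Set.image_comp, ← MonoidHom.map_closure]
  exact mem_map_of_mem f hi

theorem map (h : IndependentFamily x) {f : G →* H} (hf : Function.Injective f) :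
    IndependentFamily (f ∘ x) := by
  intro i hi
  rw [Set.image_comp, ← MonoidHom.map_closure] at hi
  exact h i ((mem_map_iff_mem hf).1 hi)

theorem comp (h : IndependentFamily x) {e : κ → ι} (he : Function.Injective e) :
    IndependentFamily (x ∘ e) := by
  intro i hi
  apply h (e i)
  refine closure_mono ?_ hi
  rintro _ ⟨j, hj, rfl⟩
  exact ⟨e j, he.ne hj, rfl⟩

theorem mem_of_mem_closure (h : IndependentFamily x) {s : Set ι} {i : ι}
    (hi : x i ∈ closure (x '' s)) : i ∈ s := by
  by_contra his
  exact h i (closure_mono (Set.image_mono (Set.subset_compl_singleton_iff.2 his)) hi)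

theorem strictMono_closure_image (h : IndependentFamily x) :
    StrictMono fun s : Set ι => closure (x '' s) := by
  intro s t hst
  obtain ⟨i, hit, his⟩ := Set.exists_of_ssubset hst
  refine lt_of_le_of_ne (closure_mono (Set.image_mono hst.subset)) fun heq => his ?_
  refine h.mem_of_mem_closure ?_
  rw [show closure (x '' s) = closure (x '' t) from heq]
  exact subset_closure (Set.mem_image_of_mem x hit)

theorem inv_mul (h : IndependentFamily x) {T : Set ι} {w : ι → G}
    (hw : ∀ i, w i ∈ closure (x '' T)) :
    IndependentFamily fun i : ↥Tᶜ => (w i)⁻¹ * x i := by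
  intro i hi
  have hw' : ∀ j, w j ∈ closure (x '' {i.1}ᶜ) := fun j =>
    closure_mono (Set.image_mono (Set.subset_compl_singleton_iff.2 i.2)) (hw j)
  have hi' : (w i)⁻¹ * x i ∈ closure (x '' {i.1}ᶜ) := by
    refine (closure_le _).2 ?_ hi
    rintro _ ⟨j, hj, rfl⟩
    exact mul_mem (inv_mem (hw' j))
      (subset_closure (Set.mem_image_of_mem x (Subtype.coe_injective.ne hj)))
  exact h i ((mul_mem_cancel_left (inv_mem (hw' i))).1 hi')

end IndependentFamily

theorem independentFamily_restrict_iff {x : ι → G} {T : Set ι} :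
    IndependentFamily (fun i : T => x i) ↔ ∀ i ∈ T, x i ∉ closure (x '' (T \ {i})) := by
  have himage : ∀ i : T, (fun j : T => x j) '' {i}ᶜ = x '' (T \ {i.1}) := fun i => by
    rw [show (fun j : T => x j) = x ∘ Subtype.val from rfl, Set.image_comp,
      Set.image_compl_eq_range_sdiff_image Subtype.coe_injective, Subtype.range_coe,
      Set.image_singleton]
  exact Subtype.forall.trans (forall₂_congr fun i hi => by rw [himage ⟨i, hi⟩])

theorem exists_independentFamily_closure_eq [Finite ι] (x : ι → G) :
    ∃ T : Set ι, closure (x '' T) = closure (Set.range x) ∧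
      IndependentFamily fun i : T => x i := by
  obtain ⟨T, hT⟩ := exists_minimal_of_wellFoundedLT
    (fun T : Set ι => closure (x '' T) = closure (Set.range x)) ⟨Set.univ, by rw [Set.image_univ]⟩
  refine ⟨T, hT.prop, independentFamily_restrict_iff.2 fun i hiT hi => ?_⟩
  have hle : x '' T ⊆ closure (x '' (T \ {i})) := by
    rintro _ ⟨j, hj, rfl⟩
    by_cases hji : j = i
    · exact hji ▸ hi
    · exact subset_closure ⟨j, ⟨hj, hji⟩, rfl⟩
  have hgen : closure (x '' (T \ {i})) = closure (Set.range x) :=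
    (Subgroup.closure_mono (Set.image_subset_range _ _)).antisymm (hT.prop ▸ (closure_le _).2 hle)
  exact (hT.le_of_le hgen Set.sdiff_subset hiT).2 rfl

theorem two_mul_card_le_of_lt [Finite G] {A B : Subgroup G} (h : A < B) :
    2 * Nat.card A ≤ Nat.card B := by
  obtain ⟨c, hc⟩ := card_dvd_of_le h.le
  have hc0 : c ≠ 0 := by
    rintro rfl
    exact Nat.card_pos.ne' hc
  have hc1 : c ≠ 1 := by
    rintro rfl
    exact h.ne (eq_of_le_of_card_ge h.le (by rw [hc, mul_one]))
  rw [hc, mul_comm]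
  exact Nat.mul_le_mul_left _ (by omega)

theorem IndependentFamily.two_pow_ncard_le [Finite ι] [Finite G] {x : ι → G}
    (h : IndependentFamily x) (s : Set ι) : 2 ^ s.ncard ≤ Nat.card (closure (x '' s)) := by
  induction s, s.toFinite using Set.Finite.induction_on with
  | empty => simp
  | @insert i s hi hs ih =>
    rw [Set.ncard_insert_of_notMem hi hs, pow_succ']
    exact (Nat.mul_le_mul_left 2 ih).trans
      (two_mul_card_le_of_lt (h.strictMono_closure_image (Set.ssubset_insert hi)))

/-- Every finite independent family of elements of `G` has at most `d` members. Families are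
indexed by `Fin m` to avoid a universe parameter; see `IndepBound.card_le` for other index types. -/
def IndepBound (G : Type*) [Group G] (d : ℕ) : Prop :=
  ∀ ⦃m : ℕ⦄ (x : Fin m → G), IndependentFamily x → m ≤ d

namespace IndepBound

variable {d e : ℕ}

theorem card_le (h : IndepBound G d) [Finite ι] {x : ι → G} (hx : IndependentFamily x) :
    Nat.card ι ≤ d :=
  h _ (hx.comp (Finite.equivFin ι).symm.injective)

theorem of_injective (h : IndepBound H d) {f : G →* H} (hf : Function.Injective f) :
    IndepBound G d :=
  fun _ _ hx => h _ (hx.map hf)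

theorem of_surjective (h : IndepBound G d) {f : G →* H} (hf : Function.Surjective f) :
    IndepBound H d := by
  intro m x hx
  have hsection : f ∘ (Function.surjInv hf ∘ x) = x := funext fun i => Function.surjInv_eq hf (x i)
  exact h _ (IndependentFamily.of_map f (by rwa [hsection]))

theorem of_le {A B : Subgroup G} (h : IndepBound B d) (hAB : A ≤ B) : IndepBound A d :=
  h.of_injective (inclusion_injective hAB)

theorem of_ker (f : G →* H) (hH : IndepBound H d) (hker : IndepBound f.ker e) :
    IndepBound G (d + e) := by
  intro m x hx
  obtain ⟨T, hT, hTind⟩ := exists_independentFamily_closure_eq (f ∘ x)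
  have hlift : ∀ i, ∃ w ∈ closure (x '' T), f w = f (x i) := by
    intro i
    rw [← Subgroup.mem_map, MonoidHom.map_closure, ← Set.image_comp, hT]
    exact subset_closure ⟨i, rfl⟩
  choose w hw hfw using hlift
  let u (i : ↥Tᶜ) : f.ker := ⟨(w i)⁻¹ * x i, by simp [MonoidHom.mem_ker, hfw]⟩
  have hu : IndependentFamily u := .of_map f.ker.subtype (hx.inv_mul hw)
  calc m = T.ncard + Tᶜ.ncard := by rw [Set.ncard_add_ncard_compl, Nat.card_fin]
    _ ≤ d + e := add_le_add (hH.card_le hTind) (hker.card_le hu)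

theorem of_map {A : Subgroup G} (f : G →* H) (hmap : IndepBound (A.map f) d)
    (hker : IndepBound (f.ker ⊓ A : Subgroup G) e) : IndepBound A (d + e) := by
  refine of_ker (f.subgroupMap A) hmap ?_
  let incl : (f.subgroupMap A).ker →* (f.ker ⊓ A : Subgroup G) :=
    (A.subtype.comp (f.subgroupMap A).ker.subtype).codRestrict _
      fun g => ⟨congrArg Subtype.val g.2, g.1.2⟩
  have hincl : Function.Injective incl := fun g h hgh =>
    Subtype.ext (Subtype.ext (congrArg (fun y : (f.ker ⊓ A : Subgroup G) => (y : G)) hgh))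
  exact hker.of_injective hincl

theorem of_jointly_injective {f : G →* H} {g : G →* K} (hH : IndepBound H d)
    (hK : IndepBound K e) (hfg : ∀ x, f x = 1 → g x = 1 → x = 1) : IndepBound G (d + e) := by
  have hker : Function.Injective (g.comp f.ker.subtype) :=
    (injective_iff_map_eq_one _).2 fun x hx => Subtype.ext (hfg x x.2 hx)
  exact of_ker f hH (hK.of_injective hker)

theorem sup_of_le_centralizer {A B : Subgroup G} (hA : IndepBound A d) (hB : IndepBound B e)
    (hAB : A ≤ centralizer B) : IndepBound (A ⊔ B : Subgroup G) (d + e) := by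
  have hcomm : ∀ (a : A) (b : B), Commute (A.subtype a) (B.subtype b) :=
    fun a b => (mem_centralizer_iff.1 (hAB a.2) b b.2).symm
  have hrange : (A.subtype.noncommCoprod B.subtype hcomm).range = A ⊔ B := by
    rw [MonoidHom.noncommCoprod_range, range_subtype, range_subtype]
  rw [← hrange]
  exact (of_jointly_injective (f := MonoidHom.fst A B) (g := MonoidHom.snd A B) hA hB
    fun _ h₁ h₂ => Prod.ext h₁ h₂).of_surjective (MonoidHom.rangeRestrict_surjective _)

theorem of_card_lt [Finite G] (h : Nat.card G < 2 ^ (d + 1)) : IndepBound G d := by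
  intro m x hx
  have hpow : 2 ^ m ≤ Nat.card G := by
    simpa using (hx.two_pow_ncard_le Set.univ).trans (card_le_card_group _)
  exact Nat.lt_succ_iff.1 ((Nat.pow_lt_pow_iff_right one_lt_two).1 (hpow.trans_lt h))

theorem bot : IndepBound (⊥ : Subgroup G) d :=
  of_card_lt (by rw [card_bot]; exact Nat.one_lt_two_pow d.succ_ne_zero)

theorem log_card [Finite G] {c : ℕ} (h : Nat.card G ≤ c) : IndepBound G (Nat.log 2 c) :=
  of_card_lt (h.trans_lt (Nat.lt_pow_succ_log_self one_lt_two c))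

end IndepBound

end Independence

section PermFour

variable {α : Type*} [Fintype α] [DecidableEq α]

theorem card_subgroup_alternatingGroup_ne_six (hα : Nat.card α = 4)
    (A : Subgroup (alternatingGroup α)) : Nat.card A ≠ 6 := by
  intro hA
  have hindex : A.index = 2 := by
    have := A.card_mul_index
    rw [alternatingGroup.card_of_card_eq_four hα, hA] at this
    omega
  have : A.Normal := normal_of_index_eq_two hindex
  have : IsCyclic (alternatingGroup α ⧸ A) := isCyclic_of_prime_card (p := 2) hindex
  have hle : alternatingGroup.kleinFour α ≤ A := by
    rw [alternatingGroup.kleinFour_eq_commutator hα]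
    exact (Normal.quotient_commutative_iff_commutator_le).1 inferInstance
  have hdvd := card_dvd_of_le hle
  rw [alternatingGroup.kleinFour_card_of_card_eq_four hα, hA] at hdvd
  omega

theorem eq_kleinFour_of_card_eq_four (hα : Nat.card α = 4) {A : Subgroup (alternatingGroup α)}
    (hA : Nat.card A = 4) : A = alternatingGroup.kleinFour α := by
  obtain ⟨S, hS⟩ := (IsPGroup.of_card (p := 2) (n := 2) hA).exists_le_sylow
  rw [alternatingGroup.two_sylow_eq_kleinFour_of_card_eq_four hα S] at hS
  refine eq_of_le_of_card_ge hS ?_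
  rw [alternatingGroup.kleinFour_card_of_card_eq_four hα, hA]

theorem IndepBound.alternatingGroup_of_card_eq_four (hα : Nat.card α = 4) :
    IndepBound (alternatingGroup α) 2 := by
  intro m x hx
  by_contra! hm
  let y := x ∘ Fin.castLE (show 3 ≤ m from hm)
  have hy : IndependentFamily y := hx.comp (Fin.castLE_injective _)
  have hpair : ∀ i, closure (y '' {i}ᶜ) = alternatingGroup.kleinFour α := by
    intro i
    have hlower := hy.two_pow_ncard_le {i}ᶜ
    have htop : closure (y '' {i}ᶜ) < ⊤ := lt_top_iff_ne_top.2 fun h => hy i (h ▸ mem_top _)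
    have hupper := two_mul_card_le_of_lt htop
    have hdvd := card_subgroup_dvd_card (closure (y '' {i}ᶜ))
    have hsix := card_subgroup_alternatingGroup_ne_six hα (closure (y '' {i}ᶜ))
    rw [card_top, alternatingGroup.card_of_card_eq_four hα] at hupper
    rw [alternatingGroup.card_of_card_eq_four hα] at hdvd
    rw [Set.ncard_compl, Set.ncard_singleton, Nat.card_fin] at hlower
    apply eq_kleinFour_of_card_eq_four hα
    generalize Nat.card (closure (y '' {i}ᶜ)) = c at *
    have : c ≤ 6 := by omega
    interval_cases c <;> omega
  apply hy 0
  rw [hpair 0, ← hpair 1]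
  exact subset_closure (Set.mem_image_of_mem y zero_ne_one)

theorem IndepBound.perm_of_card_le_four {Ω : Type*} [Fintype Ω] {d : ℕ}
    (h : Fintype.card Ω = d + 1) (hd : d ≤ 3) : IndepBound (Equiv.Perm Ω) d := by
  classical
  rcases hd.eq_or_lt with rfl | hd
  · have hsign : IndepBound ℤˣ 1 := of_card_lt (by rw [Nat.card_eq_fintype_card]; decide)
    exact of_ker Equiv.Perm.sign hsign
      (alternatingGroup_of_card_eq_four (by rw [Nat.card_eq_fintype_card, h]))
  · apply of_card_lt
    rw [Nat.card_eq_fintype_card, Fintype.card_perm, h]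
    interval_cases d <;> decide

end PermFour

section Deletion

variable {ι κ G H K : Type*} [Group G] [Group H] [Group K]

/-- The members of a family with index in `I`, as elements of the subgroup they generate. -/
def generators (x : ι → G) (I : Set ι) (i : I) : closure (x '' I) :=
  ⟨x i, subset_closure (Set.mem_image_of_mem x i.2)⟩

theorem closure_le_centralizer_closure {s t : Set G} (h : ∀ a ∈ s, ∀ b ∈ t, Commute a b) :
    closure s ≤ centralizer (closure t) := by
  rw [centralizer_closure, closure_le]
  exact fun a ha => mem_centralizer_iff.2 fun b hb => (h a ha b hb).symm

/-- After deleting some members of the family, the number of deleted members plus the size of any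
independent family in the subgroup generated by the remaining members is at most `m`. -/
def DeletionBound (x : ι → G) (m : ℕ) : Prop :=
  ∃ (R : Finset ι) (d : ℕ), R.card + d ≤ m ∧ IndepBound (closure (x '' (R : Set ι)ᶜ)) d

namespace DeletionBound

variable {x : ι → G} {m m₁ m₂ d : ℕ}

theorem mono (h : DeletionBound x m₁) (hm : m₁ ≤ m₂) : DeletionBound x m₂ := by
  obtain ⟨R, d, hd, hR⟩ := h
  exact ⟨R, d, hd.trans hm, hR⟩

theorem of_indepBound (h : IndepBound G d) : DeletionBound x d :=
  ⟨∅, d, by rw [Finset.card_empty, zero_add], h.of_injective (subtype_injective _)⟩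

theorem map (h : DeletionBound x m) (f : G →* H) : DeletionBound (f ∘ x) m := by
  obtain ⟨R, d, hd, hR⟩ := h
  refine ⟨R, d, hd, ?_⟩
  rw [Set.image_comp, ← MonoidHom.map_closure]
  exact hR.of_surjective (f.subgroupMap_surjective _)

theorem of_jointly_injective {f : G →* H} {g : G →* K} (hf : DeletionBound (f ∘ x) m₁)
    (hg : DeletionBound (g ∘ x) m₂) (hfg : ∀ y, f y = 1 → g y = 1 → y = 1) :
    DeletionBound x (m₁ + m₂) := by
  classical
  obtain ⟨R₁, d₁, hd₁, hR₁⟩ := hf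
  obtain ⟨R₂, d₂, hd₂, hR₂⟩ := hg
  refine ⟨R₁ ∪ R₂, d₁ + d₂, ?_, ?_⟩
  · have := Finset.card_union_le R₁ R₂
    omega
  rw [Finset.coe_union]
  set A := closure (x '' (R₁ ∪ R₂ : Set ι)ᶜ)
  have hfA : A.map f ≤ closure (f ∘ x '' (R₁ : Set ι)ᶜ) := by
    rw [MonoidHom.map_closure, ← Set.image_comp]
    exact Subgroup.closure_mono (Set.image_mono (Set.compl_subset_compl.2 Set.subset_union_left))
  have hgA : A.map g ≤ closure (g ∘ x '' (R₂ : Set ι)ᶜ) := by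
    rw [MonoidHom.map_closure, ← Set.image_comp]
    exact Subgroup.closure_mono (Set.image_mono (Set.compl_subset_compl.2 Set.subset_union_right))
  exact IndepBound.of_jointly_injective (f := f.subgroupMap A) (g := g.subgroupMap A)
    (hR₁.of_le hfA) (hR₂.of_le hgA) fun y h₁ h₂ =>
      Subtype.ext (hfg y (congrArg Subtype.val h₁) (congrArg Subtype.val h₂))

theorem of_ker {f : G →* H} (hf : DeletionBound (f ∘ x) m)
    (hker : IndepBound (f.ker ⊓ closure (Set.range x) : Subgroup G) d) :
    DeletionBound x (m + d) := by
  obtain ⟨R, e, he, hR⟩ := hf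
  refine ⟨R, e + d, by omega, IndepBound.of_map f ?_ (hker.of_le ?_)⟩
  · rwa [MonoidHom.map_closure, ← Set.image_comp]
  · exact inf_le_inf_left _ (Subgroup.closure_mono (Set.image_subset_range _ _))

theorem of_injective {f : G →* H} (hf : Function.Injective f) (h : DeletionBound (f ∘ x) m) :
    DeletionBound x m := by
  refine h.of_ker (d := 0) ?_
  rw [f.ker_eq_bot hf, bot_inf_eq]
  exact IndepBound.bot

theorem of_commute {I J : Set ι} {E : Finset ι} (hE : ∀ i ∉ E, i ∈ I ∨ i ∈ J)
    (hI : DeletionBound (fun i : I => x i) m₁) (hJ : DeletionBound (fun j : J => x j) m₂)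
    (hIJ : ∀ i ∈ I, ∀ j ∈ J, Commute (x i) (x j)) : DeletionBound x (m₁ + m₂ + E.card) := by
  classical
  obtain ⟨R₁, d₁, hd₁, hR₁⟩ := hI
  obtain ⟨R₂, d₂, hd₂, hR₂⟩ := hJ
  let R₁' := R₁.map (.subtype (· ∈ I))
  let R₂' := R₂.map (.subtype (· ∈ J))
  refine ⟨E ∪ (R₁' ∪ R₂'), d₁ + d₂, ?_, ?_⟩
  · have h₁ := Finset.card_union_le E (R₁' ∪ R₂')
    have h₂ := Finset.card_union_le R₁' R₂'
    rw [Finset.card_map, Finset.card_map] at h₂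
    omega
  have hcent : closure ((fun i : I => x i) '' (R₁ : Set I)ᶜ) ≤
      centralizer (closure ((fun j : J => x j) '' (R₂ : Set J)ᶜ)) := by
    apply closure_le_centralizer_closure
    rintro _ ⟨i, -, rfl⟩ _ ⟨j, -, rfl⟩
    exact hIJ i i.2 j j.2
  refine (hR₁.sup_of_le_centralizer hR₂ hcent).of_le ?_
  rw [closure_le]
  rintro _ ⟨i, hi, rfl⟩
  rw [Set.mem_compl_iff, Finset.mem_coe, Finset.mem_union, Finset.mem_union, not_or, not_or] at hi
  rcases hE i hi.1 with hiI | hiJ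
  · refine mem_sup_left (subset_closure ⟨⟨i, hiI⟩, fun hmem => hi.2.1 ?_, rfl⟩)
    exact Finset.mem_map_of_mem _ hmem
  · refine mem_sup_right (subset_closure ⟨⟨i, hiJ⟩, fun hmem => hi.2.2 ?_, rfl⟩)
    exact Finset.mem_map_of_mem _ hmem

theorem of_isEmpty [IsEmpty ι] : DeletionBound x 0 := by
  refine ⟨∅, 0, le_rfl, ?_⟩
  rw [Set.eq_empty_of_isEmpty (_ᶜ), Set.image_empty, Subgroup.closure_empty]
  exact IndepBound.bot

theorem of_compl {E : Finset ι} (h : DeletionBound (fun i : ↥(E : Set ι)ᶜ => x i) m) :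
    DeletionBound x (m + E.card) :=
  of_commute (J := ∅) (m₂ := 0) (fun _ hi => Or.inl hi) h of_isEmpty
    fun _ _ _ hj => hj.elim

theorem card_le [Finite ι] (h : DeletionBound x m) (hx : IndependentFamily x) :
    Nat.card ι ≤ m := by
  obtain ⟨R, d, hd, hR⟩ := h
  have hy : IndependentFamily (generators x (R : Set ι)ᶜ) :=
    .of_map (Subgroup.subtype _) (hx.comp Subtype.coe_injective)
  calc Nat.card ι = R.card + (R : Set ι)ᶜ.ncard := by
        rw [← Set.ncard_coe_finset, Set.ncard_add_ncard_compl]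
    _ ≤ R.card + d := Nat.add_le_add_left (hR.card_le hy) _
    _ ≤ m := hd

end DeletionBound

end Deletion

section CommutingSubgroups

open MulAction

variable {G Ω : Type*} [Group G] [MulAction G Ω] {A B : Subgroup G}

theorem faithfulSMul_subMulAction_of_le_centralizer [FaithfulSMul G Ω] (hAB : A ≤ centralizer B)
    [IsPretransitive (A ⊔ B : Subgroup G) Ω] {s : SubMulAction A Ω} {x : Ω} (hx : x ∈ s) :
    FaithfulSMul A s := by
  refine ⟨fun {g h} hgh => Subtype.ext (FaithfulSMul.eq_of_smul_eq_smul fun y : Ω => ?_)⟩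
  obtain ⟨⟨u, hu⟩, rfl⟩ := exists_smul_eq (A ⊔ B : Subgroup G) x y
  have hB : B ≤ normalizer A := (le_centralizer_iff.1 hAB).trans (centralizer_le_normalizer _)
  rw [sup_comm, ← SetLike.mem_coe, coe_mul_of_left_le_normalizer_right _ _ hB] at hu
  obtain ⟨q, hq, p, hp, rfl⟩ := hu
  have hpx : (g : G) • p • x = (h : G) • p • x :=
    congrArg Subtype.val (hgh ⟨p • x, s.smul_mem ⟨p, hp⟩ hx⟩)
  have hgq : q * g = g * q := mem_centralizer_iff.1 (hAB g.2) q hq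
  have hhq : q * h = h * q := mem_centralizer_iff.1 (hAB h.2) q hq
  change (g : G) • (q * p) • x = (h : G) • (q * p) • x
  rw [mul_smul, ← mul_smul (g : G), ← mul_smul (h : G), ← hgq, ← hhq, mul_smul, mul_smul, hpx]

theorem card_orbit_dvd_card_of_le_centralizer (hAB : A ≤ centralizer B)
    [IsPretransitive (A ⊔ B : Subgroup G) Ω] (x : Ω) : Nat.card (orbit A x) ∣ Nat.card Ω := by
  have hnormal : (A.subgroupOf (A ⊔ B)).Normal := by
    rw [normal_subgroupOf_iff_le_normalizer le_sup_left, sup_le_iff]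
    exact ⟨le_normalizer, (le_centralizer_iff.1 hAB).trans (centralizer_le_normalizer _)⟩
  have horbit : orbit (A.subgroupOf (A ⊔ B)) x = orbit A x := by
    ext y
    constructor
    · rintro ⟨⟨⟨g, hg⟩, hgA⟩, rfl⟩
      exact ⟨⟨g, hgA⟩, rfl⟩
    · rintro ⟨⟨g, hg⟩, rfl⟩
      exact ⟨⟨⟨g, mem_sup_left hg⟩, hg⟩, rfl⟩
  rw [← horbit]
  exact (IsBlock.orbit_of_normal x).ncard_dvd_card (nonempty_orbit x)

theorem card_le_card_orbit_of_le_centralizer [Finite Ω] [FaithfulSMul G Ω]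
    (hAB : A ≤ centralizer B) [IsPretransitive B Ω] (x : Ω) :
    Nat.card A ≤ Nat.card (orbit A x) := by
  refine Nat.card_le_card_of_injective (fun g : A => (⟨g • x, mem_orbit x g⟩ : orbit A x))
    fun g h hgh => Subtype.ext (FaithfulSMul.eq_of_smul_eq_smul fun y : Ω => ?_)
  have hx : (g : G) • x = (h : G) • x := congrArg Subtype.val hgh
  obtain ⟨⟨q, hq⟩, rfl⟩ := exists_smul_eq B x y
  have hgq : q * g = g * q := mem_centralizer_iff.1 (hAB g.2) q hq
  have hhq : q * h = h * q := mem_centralizer_iff.1 (hAB h.2) q hq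
  change (g : G) • q • x = (h : G) • q • x
  rw [← mul_smul, ← mul_smul, ← hgq, ← hhq, mul_smul, mul_smul, hx]

theorem isPretransitive_of_le (h : A ≤ B) [IsPretransitive A Ω] : IsPretransitive B Ω where
  exists_smul_eq y z := by
    obtain ⟨⟨g, hg⟩, rfl⟩ := exists_smul_eq A y z
    exact ⟨⟨g, h hg⟩, rfl⟩

theorem not_isPretransitive_bot (Ω : Type*) [MulAction G Ω] [Nontrivial Ω] :
    ¬ IsPretransitive (⊥ : Subgroup G) Ω := by
  intro h
  obtain ⟨y, z, hyz⟩ := exists_pair_ne Ω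
  obtain ⟨g, rfl⟩ := exists_smul_eq (⊥ : Subgroup G) y z
  rw [Subsingleton.elim g 1, one_smul] at hyz
  exact hyz rfl

theorem orbit_ne_univ_of_not_isPretransitive (h : ¬ IsPretransitive G Ω) (x : Ω) :
    orbit G x ≠ Set.univ := fun hx =>
  h (isPretransitive_iff_orbit_eq_univ x |>.2 hx)

theorem card_orbit_lt_card_of_not_isPretransitive [Finite Ω] (h : ¬ IsPretransitive G Ω) (x : Ω) :
    Nat.card (orbit G x) < Nat.card Ω := by
  rw [← Set.ncard_univ Ω]
  exact Set.ncard_lt_ncard (Set.ssubset_univ_iff.2 (orbit_ne_univ_of_not_isPretransitive h x))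

end CommutingSubgroups

section StringFamilies

open MulAction

variable {ι G H Ω : Type*} [Group G] [Group H] [MulAction G Ω]

/-- The orbit of a point as an invariant subset, on which the group acts again. -/
def orbitSubMulAction (G : Type*) {Ω : Type*} [Group G] [MulAction G Ω] (y : Ω) :
    SubMulAction G Ω where
  carrier := orbit G y
  smul_mem' g _ h := mem_orbit_of_mem_orbit g h

theorem mem_orbitSubMulAction (y : Ω) : y ∈ orbitSubMulAction G y :=
  mem_orbit_self y

namespace DeletionBound

variable {x : ι → G} {m m₁ m₂ : ℕ}

theorem of_subMulAction [FaithfulSMul G Ω] {s : SubMulAction G Ω}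
    (hs : DeletionBound (toPermHom G s ∘ x) m₁)
    (hsc : DeletionBound (toPermHom G (sᶜ : SubMulAction G Ω) ∘ x) m₂) :
    DeletionBound x (m₁ + m₂) := by
  refine of_jointly_injective hs hsc fun g hg hgc => FaithfulSMul.eq_of_smul_eq_smul fun y : Ω => ?_
  rw [one_smul]
  by_cases hy : y ∈ s
  · exact congrArg Subtype.val (Equiv.congr_fun hg ⟨y, hy⟩)
  · exact congrArg Subtype.val (Equiv.congr_fun hgc ⟨y, hy⟩)

theorem of_not_isPretransitive [Finite Ω] [FaithfulSMul G Ω] {i : ι}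
    (hi : ¬ IsPretransitive (closure (x '' {i}ᶜ)) Ω)
    (ih : ∀ s : SubMulAction (closure (x '' {i}ᶜ)) Ω, Nonempty s → Nat.card s < Nat.card Ω →
      DeletionBound (toPermHom (closure (x '' {i}ᶜ)) s ∘ generators x {i}ᶜ) (Nat.card s - 1)) :
    DeletionBound x (Nat.card Ω - 1) := by
  have hΩ : Nonempty Ω := by
    by_contra hΩ
    rw [not_nonempty_iff] at hΩ
    exact hi inferInstance
  obtain ⟨y⟩ := hΩ
  let s := orbitSubMulAction (closure (x '' {i}ᶜ)) y
  have hs : Nat.card s < Nat.card Ω := card_orbit_lt_card_of_not_isPretransitive hi y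
  have hs0 : 0 < Nat.card s := Nat.card_pos_iff.2 ⟨⟨y, mem_orbitSubMulAction y⟩, inferInstance⟩
  have hadd : Nat.card s + Nat.card (sᶜ : SubMulAction _ Ω) = Nat.card Ω :=
    Set.ncard_add_ncard_compl (s : Set Ω)
  have hsc0 : Nonempty (sᶜ : SubMulAction _ Ω) := Finite.card_pos_iff.1 (by omega)
  have hcompl := (of_subMulAction (ih s ⟨y, mem_orbitSubMulAction y⟩ hs)
    (ih sᶜ hsc0 (by omega))).map (closure (x '' {i}ᶜ)).subtype
  have hx := of_compl (x := x) (E := {i}) (by rwa [Finset.coe_singleton])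
  refine hx.mono ?_
  rw [Finset.card_singleton]
  have : 0 < Nat.card (sᶜ : SubMulAction _ Ω) := Nat.card_pos
  omega

end DeletionBound

variable [LinearOrder ι]

/-- A family indexed by a linear order in which any two members commute unless their indices are
neighbours: the commutation relations of a string diagram. -/
def IsString (x : ι → G) : Prop :=
  ∀ ⦃i j k⦄, i < j → j < k → Commute (x i) (x k)

namespace IsString

variable {x : ι → G}

theorem map (h : IsString x) (f : G →* H) : IsString (f ∘ x) :=
  fun _ _ _ hij hjk => (h hij hjk).map f

theorem restrict (h : IsString x) (I : Set ι) : IsString (generators x I) :=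
  fun _ _ _ hij hjk => Subtype.ext (h hij hjk)

theorem closure_Iio_le_centralizer (h : IsString x) {i j : ι} (hij : i ≤ j) :
    closure (x '' Set.Iio i) ≤ centralizer (closure (x '' Set.Ioi j)) := by
  apply closure_le_centralizer_closure
  rintro _ ⟨k, hk, rfl⟩ _ ⟨l, hl, rfl⟩
  exact h (lt_of_lt_of_le hk hij) hl

end IsString

theorem closure_image_Iio_sup_Ioi (x : ι → G) (i : ι) :
    closure (x '' Set.Iio i) ⊔ closure (x '' Set.Ioi i) = closure (x '' {i}ᶜ) := by
  rw [← Subgroup.closure_union, ← Set.image_union, Set.Iio_union_Ioi]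

theorem two_mul_le_of_dvd_of_lt {c n : ℕ} (hc : c ∣ n) (hcn : c < n) : 2 * c ≤ n := by
  obtain ⟨e, rfl⟩ := hc
  have he : 2 ≤ e := by
    by_contra! he
    interval_cases e <;> omega
  rw [mul_comm]
  exact Nat.mul_le_mul_left c he

theorem two_mul_add_two_le_two_pow {l : ℕ} (hl : 3 ≤ l) : 2 * l + 2 ≤ 2 ^ l := by
  induction l, hl using Nat.le_induction with
  | base => norm_num
  | succ l _ ih => rw [pow_succ]; omega

theorem log_add_log_le {n c : ℕ} (hn : 5 ≤ n) (hc : c ∣ n) (hcn : c < n) :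
    Nat.log 2 c + Nat.log 2 n + 3 ≤ n := by
  have hhalf := two_mul_le_of_dvd_of_lt hc hcn
  rcases hn.eq_or_lt with rfl | hn6
  · have : c ≤ 2 := by omega
    interval_cases c <;> first | omega | decide
  · have hc0 : c ≠ 0 := by
      rintro rfl
      rw [zero_dvd_iff] at hc
      omega
    have hlog : Nat.log 2 c + 1 ≤ Nat.log 2 n := by
      rw [← Nat.log_mul_base one_lt_two hc0, mul_comm]
      exact Nat.log_mono_right hhalf
    have hpow := Nat.pow_log_le_self 2 (show n ≠ 0 by omega)
    by_cases hl : 3 ≤ Nat.log 2 n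
    · have := two_mul_add_two_le_two_pow hl
      omega
    · omega

namespace DeletionBound

variable {x : ι → G}

theorem of_commuting_orbits [Finite Ω] [FaithfulSMul G Ω] (hx : IsString x) {i : ι}
    [IsPretransitive (closure (x '' {i}ᶜ)) Ω] (y : Ω)
    (hlt : ¬ IsPretransitive (closure (x '' Set.Iio i)) Ω)
    (hgt : ¬ IsPretransitive (closure (x '' Set.Ioi i)) Ω)
    (ih : ∀ (I : Set ι) (s : SubMulAction (closure (x '' I)) Ω), Nonempty s →
      Nat.card s < Nat.card Ω →
      DeletionBound (toPermHom (closure (x '' I)) s ∘ generators x I) (Nat.card s - 1)) :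
    DeletionBound x (Nat.card Ω - 1) := by
  have horbit : ∀ I J : Set ι, closure (x '' I) ≤ centralizer (closure (x '' J)) →
      closure (x '' I) ⊔ closure (x '' J) = closure (x '' {i}ᶜ) →
      ¬ IsPretransitive (closure (x '' I)) Ω →
      ∃ c, 0 < c ∧ 2 * c ≤ Nat.card Ω ∧ DeletionBound (fun i : I => x i) (c - 1) := by
    intro I J hIJ hsup hI
    have : IsPretransitive (closure (x '' I) ⊔ closure (x '' J) : Subgroup G) Ω := by rwa [hsup]
    have hdvd := card_orbit_dvd_card_of_le_centralizer hIJ y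
    have hcard := card_orbit_lt_card_of_not_isPretransitive hI y
    have hy := mem_orbitSubMulAction (G := closure (x '' I)) y
    have := faithfulSMul_subMulAction_of_le_centralizer hIJ hy
    have hpos : 0 < Nat.card (orbit (closure (x '' I)) y) :=
      Nat.card_pos_iff.2 ⟨⟨y, hy⟩, inferInstance⟩
    refine ⟨_, hpos, two_mul_le_of_dvd_of_lt hdvd hcard, ?_⟩
    exact ((ih I _ ⟨y, hy⟩ hcard).of_injective toPerm_injective).map (Subgroup.subtype _)
  have hcent := hx.closure_Iio_le_centralizer (le_refl i)
  have hsup := closure_image_Iio_sup_Ioi x i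
  obtain ⟨c₁, hc₁, hc₁Ω, h₁⟩ := horbit _ _ hcent hsup hlt
  obtain ⟨c₂, hc₂, hc₂Ω, h₂⟩ := horbit _ _ (le_centralizer_iff.1 hcent) (by rwa [sup_comm]) hgt
  refine (of_commute (E := {i}) (fun k hk => ?_) h₁ h₂ fun k hk l hl => hx hk hl).mono ?_
  · exact lt_or_gt_of_ne (Finset.notMem_singleton.1 hk)
  · rw [Finset.card_singleton]
    omega

-- A group commuting with a transitive one acts semiregularly, so its order is at most the size of
-- an orbit, and independent families in it are at most logarithmic in that size.
theorem of_isPretransitive_Ioi_Iio [Finite Ω] [FaithfulSMul G Ω] (hx : IsString x)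
    (hΩ : 5 ≤ Nat.card Ω) {t t' : ι} (htt' : t ⋖ t')
    [IsPretransitive (closure (x '' Set.Ioi t)) Ω] [IsPretransitive (closure (x '' Set.Iio t')) Ω]
    (ht' : ¬ IsPretransitive (closure (x '' Set.Ioi t')) Ω) :
    DeletionBound x (Nat.card Ω - 1) := by
  obtain ⟨y⟩ : Nonempty Ω := Finite.card_pos_iff.1 (by omega)
  have : Finite G := Finite.of_injective (toPerm : G → Equiv.Perm Ω) toPerm_injective
  have hI := card_le_card_orbit_of_le_centralizer (hx.closure_Iio_le_centralizer (le_refl t)) y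
  have hcent := le_centralizer_iff.1 (hx.closure_Iio_le_centralizer (le_refl t'))
  have hJ := card_le_card_orbit_of_le_centralizer hcent y
  have : IsPretransitive (closure (x '' Set.Ioi t') ⊔ closure (x '' Set.Iio t') : Subgroup G) Ω :=
    isPretransitive_of_le (A := closure (x '' Set.Iio t')) le_sup_right
  have hdvd := card_orbit_dvd_card_of_le_centralizer hcent y
  have hlog := log_add_log_le hΩ hdvd (card_orbit_lt_card_of_not_isPretransitive ht' y)
  have hbound : ∀ {I : Set ι} {d : ℕ}, IndepBound (closure (x '' I)) d →
      DeletionBound (fun i : I => x i) d :=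
    fun h => (of_indepBound (x := generators x _) h).map (Subgroup.subtype _)
  have hcover : ∀ k ∉ ({t, t'} : Finset ι), k ∈ Set.Iio t ∨ k ∈ Set.Ioi t' := by
    intro k hk
    rw [Finset.mem_insert, Finset.mem_singleton, not_or] at hk
    refine (lt_or_gt_of_ne hk.1).imp id fun htk => ?_
    exact lt_of_le_of_ne (htt'.ge_of_gt htk) (Ne.symm hk.2)
  refine (of_commute hcover
    (hbound (.log_card (hI.trans (Nat.card_le_card_of_injective _ Subtype.coe_injective))))
    (hbound (.log_card hJ)) fun k hk l hl => hx hk (htt'.lt.trans hl)).mono ?_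
  rw [Finset.card_pair htt'.lt.ne]
  omega

theorem of_forall_isPretransitive [Finite ι] [Nonempty ι] [Finite Ω] [FaithfulSMul G Ω]
    (hx : IsString x) (hΩ : 5 ≤ Nat.card Ω)
    (h : ∀ i, IsPretransitive (closure (x '' Set.Iio i)) Ω ∨
      IsPretransitive (closure (x '' Set.Ioi i)) Ω) :
    DeletionBound x (Nat.card Ω - 1) := by
  have : Nontrivial Ω := Finite.one_lt_card_iff_nontrivial.1 (by omega)
  have hempty : ¬ IsPretransitive (closure (x '' ∅)) Ω := by
    rw [Set.image_empty, Subgroup.closure_empty]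
    exact not_isPretransitive_bot Ω
  obtain ⟨a, ha⟩ := Finite.exists_min (id : ι → ι)
  have hIio : Set.Iio a = ∅ := Set.Iio_eq_empty_iff.2 fun i _ => ha i
  obtain ⟨t, ht⟩ := (Set.toFinite {i | IsPretransitive (closure (x '' Set.Ioi i)) Ω}).exists_maximal
    ⟨a, (h a).resolve_left (hIio ▸ hempty)⟩
  have htmax : ¬ IsMax t := fun hmax => hempty ((Set.Ioi_eq_empty_iff.2 hmax) ▸ ht.prop)
  obtain ⟨u, htu⟩ := not_isMax_iff.1 htmax
  obtain ⟨t', htt', -⟩ := exists_covBy_le_of_lt htu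
  have ht' : ¬ IsPretransitive (closure (x '' Set.Ioi t')) Ω := fun h' =>
    htt'.lt.not_ge (ht.le_of_ge h' htt'.le)
  have htIoi : IsPretransitive (closure (x '' Set.Ioi t)) Ω := ht.prop
  have := (h t').resolve_right ht'
  exact of_isPretransitive_Ioi_Iio hx hΩ htt' ht'

end DeletionBound

theorem IsString.deletionBound_perm [Finite ι] [Finite Ω] [Nonempty Ω] {σ : ι → Equiv.Perm Ω}
    (hσ : IsString σ) : DeletionBound σ (Nat.card Ω - 1) := by
  induction hn : Nat.card Ω using Nat.strong_induction_on generalizing Ω ι with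
  | _ n IH =>
  subst hn
  have ih : ∀ (I : Set ι) (s : SubMulAction (closure (σ '' I)) Ω), Nonempty s →
      Nat.card s < Nat.card Ω →
      DeletionBound (toPermHom (closure (σ '' I)) s ∘ generators σ I) (Nat.card s - 1) :=
    fun I s _ hlt => IH _ hlt ((hσ.restrict I).map _) rfl
  rcases lt_or_ge (Nat.card Ω) 5 with hΩ | hΩ
  · have := Fintype.ofFinite Ω
    have : 0 < Nat.card Ω := Nat.card_pos
    rw [Nat.card_eq_fintype_card] at *
    exact .of_indepBound (.perm_of_card_le_four (by omega) (by omega))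
  cases isEmpty_or_nonempty ι
  · exact DeletionBound.of_isEmpty.mono (Nat.zero_le _)
  by_cases htrans : ∀ i, IsPretransitive (closure (σ '' {i}ᶜ)) Ω
  · by_cases hside : ∀ i, IsPretransitive (closure (σ '' Set.Iio i)) Ω ∨
        IsPretransitive (closure (σ '' Set.Ioi i)) Ω
    · exact .of_forall_isPretransitive hσ hΩ hside
    · push Not at hside
      obtain ⟨i, hlt, hgt⟩ := hside
      have := htrans i
      exact .of_commuting_orbits hσ (Classical.arbitrary Ω) hlt hgt ih
  · push Not at htrans
    obtain ⟨i, hi⟩ := htrans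
    exact .of_not_isPretransitive hi (ih _)

end StringFamilies

section Dihedral

variable {Γ Q : Type*} [Group Γ] [Group Q]

/-- The subgroup `D` covers `Q` along `φ`, and `c ∈ D` is a nontrivial element modulo `φ.ker` whose
square generates the part of `D` in `φ.ker`. The example to keep in mind is a dihedral group `D`
with rotation `c` that covers a Klein four-group. -/
structure IsCoveringRotation (φ : Γ →* Q) (D : Subgroup Γ) (c : Γ) : Prop where
  mem : c ∈ D
  map_ne_one : φ c ≠ 1
  inf_ker : D ⊓ φ.ker = zpowers (c ^ 2)
  map_eq_top : D.map φ = ⊤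

theorem mem_zpowers_or_mul_mem_zpowers_of_mem_closure_pair {a a' u : Γ} (ha : a * a = 1)
    (ha' : a' * a' = 1) (hu : u ∈ closure {a, a'}) :
    u ∈ zpowers (a * a') ∨ u * a ∈ zpowers (a * a') := by
  have hinv : a * (a * a') * a⁻¹ = (a * a')⁻¹ := by
    rw [mul_inv_rev, inv_eq_of_mul_eq_one_right ha, inv_eq_of_mul_eq_one_right ha', ← mul_assoc,
      ha, one_mul]
  have hnormal : zpowers a ≤ normalizer (zpowers (a * a')) := by
    rw [zpowers_le, mem_normalizer_iff_map_conj_eq, MonoidHom.map_zpowers]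
    exact (congrArg zpowers hinv).trans (zpowers_inv)
  have hle : closure {a, a'} ≤ zpowers (a * a') ⊔ zpowers a := by
    have ha_mem : a ∈ zpowers (a * a') ⊔ zpowers a := mem_sup_right (mem_zpowers a)
    rw [closure_le, Set.pair_subset_iff]
    exact ⟨ha_mem, (mul_mem_cancel_left ha_mem).1 (mem_sup_left (mem_zpowers _))⟩
  have hmem := hle hu
  rw [← SetLike.mem_coe, coe_mul_of_right_le_normalizer_left _ _ hnormal] at hmem
  obtain ⟨w, hw, v, ⟨i, rfl⟩, rfl⟩ := hmem
  have hzpow : ∀ t : ℤ, a ^ (2 * t) = 1 := fun t => by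
    rw [zpow_mul, zpow_two, ha, one_zpow]
  obtain ⟨t, rfl | rfl⟩ := i.even_or_odd'
  · left
    simpa only [hzpow, mul_one, SetLike.mem_coe] using hw
  · right
    simpa only [zpow_add_one, hzpow, one_mul, mul_assoc, ha, mul_one,
      SetLike.mem_coe] using hw

theorem zpowers_ne_top_of_isKleinFour [IsKleinFour Q] (q : Q) : zpowers q ≠ ⊤ := fun h =>
  IsKleinFour.not_isCyclic (isCyclic_iff_exists_zpowers_eq_top.2 ⟨q, h⟩)

theorem isCoveringRotation_mul [IsKleinFour Q] {φ : Γ →* Q} {a a' : Γ} (ha : a * a = 1)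
    (ha' : a' * a' = 1) (htop : (closure {a, a'}).map φ = ⊤) :
    IsCoveringRotation φ (closure {a, a'}) (a * a') := by
  have hmem : a ∈ closure {a, a'} ∧ a' ∈ closure {a, a'} :=
    ⟨subset_closure (Set.mem_insert _ _), subset_closure (Set.mem_insert_of_mem _ rfl)⟩
  have hne_top : ∀ q : Q, ¬ (φ a ∈ zpowers q ∧ φ a' ∈ zpowers q) := by
    intro q hq
    apply zpowers_ne_top_of_isKleinFour q
    rw [eq_top_iff, ← htop, MonoidHom.map_closure, closure_le, Set.image_pair,
      Set.pair_subset_iff]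
    exact hq
  have hmap_a : φ a ∉ zpowers (φ (a * a')) := fun h =>
    hne_top _ ⟨h, (mul_mem_cancel_left h).1 (map_mul φ a a' ▸ mem_zpowers _)⟩
  have hmap_mul : φ (a * a') ≠ 1 := by
    intro h
    refine hne_top (φ a) ⟨mem_zpowers _, ?_⟩
    rw [map_mul] at h
    rw [← inv_eq_of_mul_eq_one_right h]
    exact inv_mem (mem_zpowers _)
  have hsq : φ ((a * a') ^ 2) = 1 := by rw [map_pow, pow_two, IsKleinFour.mul_self]
  have hmul_mem := mul_mem hmem.1 hmem.2
  refine ⟨hmul_mem, hmap_mul, le_antisymm ?_ ?_, htop⟩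
  · rintro u ⟨huD, hu : φ u = 1⟩
    rcases mem_zpowers_or_mul_mem_zpowers_of_mem_closure_pair ha ha' huD with ⟨i, rfl⟩ | ⟨i, hi⟩
    · obtain ⟨t, rfl | rfl⟩ := i.even_or_odd'
      · exact ⟨t, by simp only [← zpow_natCast, ← zpow_mul, Nat.cast_ofNat]⟩
      · refine absurd ?_ hmap_mul
        simpa only [zpow_add_one, zpow_mul, map_mul φ _ (a * a'), map_zpow, zpow_ofNat, ← map_pow,
          hsq, one_zpow, one_mul] using hu
    · refine absurd ⟨i, ?_⟩ hmap_a
      simpa only [map_mul φ u, hu, one_mul, map_zpow] using congrArg φ hi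
  · rw [zpowers_le]
    exact ⟨pow_mem hmul_mem 2, hsq⟩

end Dihedral

section Blocks

open MulAction

theorem sum_card_fiber_sub_one {X P : Type*} [Finite X] [Fintype P] {q : X → P}
    (hq : Function.Surjective q) :
    ∑ p, (Nat.card {x // q x = p} - 1) = Nat.card X - Nat.card P := by
  have hsum : Nat.card X = ∑ p, Nat.card {x // q x = p} := by
    rw [← Nat.card_sigma, Nat.card_congr (Equiv.sigmaFiberEquiv q)]
  have hpos : ∀ p ∈ Finset.univ, 1 ≤ Nat.card {x // q x = p} := fun p _ =>
    let ⟨x, hx⟩ := hq p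
    Nat.card_pos_iff.2 ⟨⟨x, hx⟩, inferInstance⟩
  rw [Finset.sum_tsub_distrib _ hpos, ← hsum, ← Finset.card_eq_sum_ones, Finset.card_univ,
    Nat.card_eq_fintype_card (α := P)]

theorem prod_card_fiber_le {X P : Type*} [Finite X] [Fintype P] {q : X → P}
    (hq : Function.Surjective q) :
    ∏ p, Nat.card {x // q x = p} ≤ 2 ^ (Nat.card X - Nat.card P) := by
  rw [← sum_card_fiber_sub_one hq, ← Finset.prod_pow_eq_pow_sum]
  refine Finset.prod_le_prod' fun p _ => ?_
  have := (Nat.card {x // q x = p} - 1).lt_two_pow_self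
  omega

theorem prod_card_fiber_lt {X P : Type*} [Finite X] [Fintype P] {q : X → P}
    (hq : Function.Surjective q) {p : P} (hp : 3 ≤ Nat.card {x // q x = p}) :
    ∏ p, Nat.card {x // q x = p} < 2 ^ (Nat.card X - Nat.card P) := by
  have hlt : ∀ m, 3 ≤ m → m < 2 ^ (m - 1) := by
    intro m hm
    induction m, hm using Nat.le_induction with
    | base => norm_num
    | succ m hm ih =>
      rw [Nat.add_sub_cancel, ← Nat.sub_add_cancel (show 1 ≤ m by omega), pow_succ]
      omega
  rw [← sum_card_fiber_sub_one hq, ← Finset.prod_pow_eq_pow_sum]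
  refine Finset.prod_lt_prod (fun p _ => ?_) (fun p _ => ?_) ⟨p, Finset.mem_univ p, hlt _ hp⟩
  · obtain ⟨x, hx⟩ := hq p
    exact Nat.card_pos_iff.2 ⟨⟨x, hx⟩, inferInstance⟩
  · have := (Nat.card {x // q x = p} - 1).lt_two_pow_self
    omega

variable {Γ Q Ω β : Type*} [Group Γ] [Group Q] [MulAction Γ Ω] [MulAction Q β]
  {D N : Subgroup Γ} {φ : Γ →* Q} {c : Γ}

/-- The action of the centralizer of `D` on the set of `D`-orbits. -/
def centralizerOrbitHom (D : Subgroup Γ) (Ω : Type*) [MulAction Γ Ω] :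
    centralizer (D : Set Γ) →* Equiv.Perm (orbitRel.Quotient D Ω) :=
  MonoidHom.toHomPerm
    { toFun := fun g => Quotient.map' (fun x => g.1 • x) <| by
        rintro _ x ⟨u, rfl⟩
        refine ⟨u, ?_⟩
        change u.1 • g.1 • x = g.1 • u.1 • x
        rw [← mul_smul, ← mul_smul, mem_centralizer_iff.1 g.2 u.1 u.2]
      map_one' := funext fun p => Quotient.inductionOn' p fun x =>
        congrArg Quotient.mk'' (one_smul Γ x)
      map_mul' := fun g h => funext fun p => Quotient.inductionOn' p fun x =>
        congrArg Quotient.mk'' (mul_smul g.1 h.1 x) }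

/-- The elements commuting with `D` and mapping every `D`-orbit to itself. -/
def orbitwiseCentralizer (D : Subgroup Γ) (Ω : Type*) [MulAction Γ Ω] : Subgroup Γ :=
  (centralizerOrbitHom D Ω).ker.map (Subgroup.subtype _)

theorem mem_orbitwiseCentralizer {g : Γ} : g ∈ orbitwiseCentralizer D Ω ↔
    g ∈ centralizer (D : Set Γ) ∧ ∀ x : Ω, g • x ∈ orbit D x := by
  constructor
  · rintro ⟨h, hh, rfl⟩
    refine ⟨h.2, fun x => ?_⟩
    exact Quotient.exact' (Equiv.congr_fun hh (Quotient.mk'' x))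
  · rintro ⟨hg, horb⟩
    refine ⟨⟨g, hg⟩, Equiv.ext fun p => ?_, rfl⟩
    induction p using Quotient.inductionOn' with
    | _ x => exact Quotient.sound' (horb x)

theorem exists_smul_eq_of_smul_mem_orbit {g : Γ} {x : Ω} (h : g • x ∈ orbit D x) :
    ∃ u ∈ D, u • x = g • x := by
  obtain ⟨⟨u, hu⟩, hux⟩ := h
  exact ⟨u, hu, hux⟩

theorem map_eq_map_of_smul_eq [IsCancelSMul Q β] (b : Ω →ₑ[φ] β) {g h : Γ} {x : Ω}
    (hgh : g • x = h • x) : φ g = φ h :=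
  IsCancelSMul.right_cancel _ _ (b x) (by rw [← map_smulₛₗ, ← map_smulₛₗ, hgh])

theorem exists_mem_map_smul_eq [IsPretransitive Q β] (b : Ω →ₑ[φ] β) (hD : D.map φ = ⊤)
    (x : Ω) (y : β) : ∃ u ∈ D, b (u • x) = y := by
  obtain ⟨q, rfl⟩ := exists_smul_eq Q (b x) y
  obtain ⟨u, hu, rfl⟩ : q ∈ D.map φ := hD ▸ mem_top q
  exact ⟨u, hu, map_smulₛₗ b u x⟩

/-- The `D`-orbit of a point of the block over `y`. -/
def blockOrbit (D : Subgroup Γ) (b : Ω → β) (y : β) (x : b ⁻¹' {y}) : orbitRel.Quotient D Ω :=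
  Quotient.mk'' x.1

theorem blockOrbit_surjective [IsPretransitive Q β] (b : Ω →ₑ[φ] β) (hD : D.map φ = ⊤) (y : β) :
    Function.Surjective (blockOrbit D b y) := by
  intro p
  induction p using Quotient.inductionOn' with
  | _ x =>
    obtain ⟨u, hu, hux⟩ := exists_mem_map_smul_eq b hD x y
    exact ⟨⟨u • x, hux⟩, Quotient.sound' ⟨⟨u, hu⟩, rfl⟩⟩

-- An element commuting with `D` is determined by its action on one point of each `D`-orbit.
theorem card_orbitwiseCentralizer_inf_ker_le [IsPretransitive Q β] [Finite Ω] [FaithfulSMul Γ Ω]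
    [Fintype (orbitRel.Quotient D Ω)] (b : Ω →ₑ[φ] β) (hD : D.map φ = ⊤) (y : β) :
    Nat.card (orbitwiseCentralizer D Ω ⊓ φ.ker : Subgroup Γ) ≤
      ∏ p, Nat.card {x // blockOrbit D b y x = p} := by
  choose s hs using blockOrbit_surjective b hD y
  have hmem : ∀ g ∈ orbitwiseCentralizer D Ω ⊓ φ.ker, ∀ x : b ⁻¹' {y}, b (g • x.1) = y := by
    intro g hg x
    rw [map_smulₛₗ, MonoidHom.mem_ker.1 hg.2, one_smul, x.2]
  rw [← Nat.card_pi]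
  refine Nat.card_le_card_of_injective (fun g p => ⟨⟨g.1 • (s p).1, hmem g.1 g.2 _⟩, ?_⟩) ?_
  · exact (Quotient.sound' ((mem_orbitwiseCentralizer.1 g.2.1).2 (s p).1)).trans (hs p)
  · intro g h hgh
    refine Subtype.ext (FaithfulSMul.eq_of_smul_eq_smul fun x : Ω => ?_)
    have hs_smul : g.1 • (s (Quotient.mk'' x)).1 = h.1 • (s (Quotient.mk'' x)).1 :=
      congrArg (fun z => (z.1.1 : Ω)) (congrFun hgh (Quotient.mk'' x))
    obtain ⟨⟨u, hu⟩, hux⟩ := Quotient.exact' (hs (Quotient.mk'' x)).symm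
    have hg := mem_centralizer_iff.1 (mem_orbitwiseCentralizer.1 g.2.1).1 u hu
    have hh := mem_centralizer_iff.1 (mem_orbitwiseCentralizer.1 h.2.1).1 u hu
    have hsx : u • (s (Quotient.mk'' x)).1 = x := hux
    rw [← hsx, ← mul_smul, ← mul_smul, ← hg, ← hh, mul_smul, mul_smul, hs_smul]

namespace IsCoveringRotation

theorem map_mul_self (hc : IsCoveringRotation φ D c) : φ c * φ c = 1 := by
  have h : c ^ 2 ∈ D ⊓ φ.ker := hc.inf_ker ▸ mem_zpowers _
  rw [← pow_two, ← map_pow, MonoidHom.mem_ker.1 h.2]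

theorem exists_two_mul_eq_orderOf (hc : IsCoveringRotation φ D c) : ∃ m, orderOf c = 2 * m := by
  rw [← orderOf_eq_prime (p := 2) (by rw [pow_two, hc.map_mul_self]) hc.map_ne_one]
  exact orderOf_map_dvd φ c

theorem pow_eq_pow_of_map_eq (hc : IsCoveringRotation φ D c) {u : Γ} {m : ℕ} (hu : u ∈ D)
    (huc : φ u = φ c) (hm : orderOf c = 2 * m) : u ^ m = c ^ m := by
  have hmem : u * c⁻¹ ∈ D ⊓ φ.ker := by
    refine mem_inf.2 ⟨mul_mem hu (inv_mem hc.mem), ?_⟩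
    rw [MonoidHom.mem_ker, map_mul, map_inv, huc, mul_inv_cancel]
  rw [hc.inf_ker] at hmem
  obtain ⟨t, ht : (c ^ 2) ^ t = u * c⁻¹⟩ := hmem
  have hcomm : Commute ((c ^ 2) ^ t) c := ((Commute.refl c).pow_left 2).zpow_left t
  have hone : ((c ^ 2) ^ t) ^ m = 1 := by
    rw [← zpow_natCast, zpow_comm, zpow_natCast, ← pow_mul, ← hm, pow_orderOf_eq_one, one_zpow]
  rw [← mul_inv_cancel_right u c⁻¹, inv_inv, ← ht, hcomm.mul_pow, hone, one_mul]

-- If `r` moved the blocks like `c`, then `r ^ m = c ^ m ≠ 1` for `2 * m = orderOf c`.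
theorem map_ne_map [IsCancelSMul Q β] [FaithfulSMul Γ Ω] [Finite Γ]
    (hc : IsCoveringRotation φ D c) (b : Ω →ₑ[φ] β) {r : Γ}
    (hr : r ∈ orbitwiseCentralizer D Ω) (hrD : zpowers r ⊓ D = ⊥) : φ r ≠ φ c := by
  intro hrc
  obtain ⟨hcent, horb⟩ := mem_orbitwiseCentralizer.1 hr
  obtain ⟨m, hm⟩ := hc.exists_two_mul_eq_orderOf
  have hpow : r ^ m = c ^ m := by
    refine FaithfulSMul.eq_of_smul_eq_smul fun x : Ω => ?_
    obtain ⟨u, hu, hux⟩ := exists_smul_eq_of_smul_mem_orbit (horb x)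
    have hcomm : Commute u r := mem_centralizer_iff.1 hcent u hu
    have hstab : u⁻¹ * r ∈ stabilizer Γ x := by
      rw [mem_stabilizer_iff, mul_smul, ← hux, inv_smul_smul]
    have hfix : (u⁻¹ * r) ^ m • x = x := pow_mem hstab m
    rw [hcomm.inv_left.mul_pow, mul_smul, inv_pow, inv_smul_eq_iff] at hfix
    rw [hfix, hc.pow_eq_pow_of_map_eq hu ((map_eq_map_of_smul_eq b hux).trans hrc) hm]
  have hone : c ^ m = 1 := by
    rw [← mem_bot, ← hrD]
    exact ⟨hpow ▸ pow_mem (mem_zpowers r) m, pow_mem hc.mem m⟩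
  have hpos := orderOf_pos c
  have := Nat.le_of_dvd (by omega) (orderOf_dvd_of_pow_eq_one hone)
  omega

theorem card_le_two_mul_card_inf_ker [IsCancelSMul Q β] [FaithfulSMul Γ Ω] [Finite Γ]
    (hc : IsCoveringRotation φ D c) (hQ : Nat.card Q = 4) (b : Ω →ₑ[φ] β)
    (hN : N ≤ orbitwiseCentralizer D Ω) (hND : N ⊓ D = ⊥) :
    Nat.card N ≤ 2 * Nat.card (φ.ker ⊓ N : Subgroup Γ) := by
  have hmap : N.map φ < ⊤ := by
    refine lt_top_iff_ne_top.2 fun htop => ?_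
    obtain ⟨r, hr, hrc⟩ : φ c ∈ N.map φ := htop ▸ mem_top _
    refine hc.map_ne_map b (hN hr) (le_bot_iff.1 ?_) hrc
    exact hND ▸ inf_le_inf_right D (zpowers_le.2 hr)
  have : Finite Q := Nat.finite_of_card_ne_zero (by omega)
  have htwo := two_mul_card_le_of_lt hmap
  rw [card_top, hQ] at htwo
  have hcard := relIndex_mul_relIndex ⊥ (φ.ker ⊓ N) N bot_le inf_le_right
  rw [relIndex_bot_left, relIndex_bot_left, inf_relIndex_right, relIndex_ker] at hcard
  nlinarith

theorem exists_conj_sq_eq_zpow (hc : IsCoveringRotation φ D c) {v : Γ} (hv : v ∈ D) :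
    ∃ j : ℤ, (c ^ 2) ^ j = v * c ^ 2 * v⁻¹ := by
  have hc2 : c ^ 2 ∈ D ⊓ φ.ker := hc.inf_ker ▸ mem_zpowers _
  rw [← mem_zpowers_iff, ← hc.inf_ker]
  exact mem_inf.2 ⟨mul_mem (mul_mem hv hc2.1) (inv_mem hv), φ.normal_ker.conj_mem _ hc2.2 v⟩

theorem sq_mem_orbitwiseCentralizer (hc : IsCoveringRotation φ D c) (hc4 : (c ^ 2) ^ 2 = 1) :
    c ^ 2 ∈ orbitwiseCentralizer D Ω := by
  refine mem_orbitwiseCentralizer.2 ⟨mem_centralizer_iff.2 fun v hv => ?_,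
    fun x => ⟨⟨c ^ 2, pow_mem hc.mem 2⟩, rfl⟩⟩
  obtain ⟨j, hj⟩ := hc.exists_conj_sq_eq_zpow hv
  rw [← mul_inv_eq_iff_eq_mul, ← hj]
  obtain ⟨t, rfl | rfl⟩ := j.even_or_odd'
  · rw [zpow_mul, zpow_ofNat, hc4, one_zpow] at hj ⊢
    exact (conj_eq_one_iff.1 hj.symm).symm
  · rw [zpow_add_one, zpow_mul, zpow_ofNat, hc4, one_zpow, one_mul]

theorem exists_three_le_card_fiber [FaithfulSMul Γ Ω] [IsPretransitive Q β] [Finite Ω]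
    (hc : IsCoveringRotation φ D c) (b : Ω →ₑ[φ] β) (hc4 : (c ^ 2) ^ 2 ≠ 1) (y : β) :
    ∃ p, 3 ≤ Nat.card {x // blockOrbit D b y x = p} := by
  obtain ⟨z, hz⟩ : ∃ z : Ω, (c ^ 2) ^ 2 • z ≠ z := by
    by_contra! h
    exact hc4 (FaithfulSMul.eq_of_smul_eq_smul fun z : Ω => (h z).trans (one_smul Γ z).symm)
  obtain ⟨v, hv, hvz⟩ := exists_mem_map_smul_eq b hc.map_eq_top z y
  set x := v • z with hx
  set w := c ^ 2
  have hwwx : w • w • x ≠ x := by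
    intro h
    obtain ⟨j, hj⟩ := hc.exists_conj_sq_eq_zpow hv
    have hfix : (w ^ 2) ^ j • x = x := zpow_mem (K := stabilizer Γ x)
      (mem_stabilizer_iff.2 (by rw [pow_two, mul_smul, h])) j
    rw [← zpow_natCast, zpow_comm, hj, zpow_natCast, conj_pow, hx, mul_smul, mul_smul,
      inv_smul_smul, smul_left_cancel_iff] at hfix
    exact hz hfix
  have hwx : w • x ≠ x := fun h => hwwx (by rw [h, h])
  have hbw : ∀ x' : Ω, b x' = y → b (w • x') = y := fun x' hx' => by
    rw [map_smulₛₗ, map_pow, pow_two, hc.map_mul_self, one_smul, hx']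
  have horb : ∀ u : Ω, (Quotient.mk'' (w • u) : orbitRel.Quotient D Ω) = Quotient.mk'' u :=
    fun u => Quotient.sound' ⟨⟨w, pow_mem hc.mem 2⟩, rfl⟩
  refine ⟨blockOrbit D b y ⟨x, hvz⟩, ?_⟩
  change 2 < Set.ncard {x' | blockOrbit D b y x' = blockOrbit D b y ⟨x, hvz⟩}
  refine (Set.two_lt_ncard_iff (Set.toFinite _)).2 ⟨⟨x, hvz⟩, ⟨w • x, hbw _ hvz⟩,
    ⟨w • w • x, hbw _ (hbw _ hvz)⟩, rfl, horb x, (horb (w • x)).trans (horb x),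
    fun h => hwx (congrArg Subtype.val h).symm, fun h => hwwx (congrArg Subtype.val h).symm,
    fun h => hwx (smul_left_cancel w (congrArg Subtype.val h)).symm⟩

theorem eq_bot_of_sq_eq_one [IsCancelSMul Q β] [FaithfulSMul Γ Ω] [Nonempty Ω]
    (hc : IsCoveringRotation φ D c) (b : Ω →ₑ[φ] β) (hc2 : c ^ 2 = 1)
    (hN : N ≤ orbitwiseCentralizer D Ω) (hND : N ⊓ D = ⊥) : N = ⊥ := by
  have hinj : ∀ u ∈ D, ∀ v ∈ D, φ u = φ v → u = v := by
    intro u hu v hv huv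
    have hmem : u⁻¹ * v ∈ D ⊓ φ.ker := by
      refine mem_inf.2 ⟨mul_mem (inv_mem hu) hv, ?_⟩
      rw [MonoidHom.mem_ker, map_mul, map_inv, huv, inv_mul_cancel]
    rwa [hc.inf_ker, hc2, zpowers_one_eq_bot, mem_bot, inv_mul_eq_one] at hmem
  rw [← hND, eq_comm, inf_eq_left]
  intro g hg
  have horb : ∀ x : Ω, ∃ u ∈ D, u • x = g • x := fun x =>
    exists_smul_eq_of_smul_mem_orbit ((mem_orbitwiseCentralizer.1 (hN hg)).2 x)
  obtain ⟨u, hu, hux⟩ := horb (Classical.arbitrary Ω)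
  suffices u = g from this ▸ hu
  refine FaithfulSMul.eq_of_smul_eq_smul fun z : Ω => ?_
  obtain ⟨v, hv, hvz⟩ := horb z
  rw [hinj u hu v hv ((map_eq_map_of_smul_eq b hux).trans (map_eq_map_of_smul_eq b hvz).symm), hvz]

theorem card_lt_two_pow [IsCancelSMul Q β] [IsPretransitive Q β] [FaithfulSMul Γ Ω] [Finite Γ]
    [Finite Ω] [Nonempty Ω]
    (hc : IsCoveringRotation φ D c) (hQ : Nat.card Q = 4) (b : Ω →ₑ[φ] β)
    (hN : N ≤ orbitwiseCentralizer D Ω) (hND : N ⊓ D = ⊥) (y : β) :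
    Nat.card N <
      2 ^ (Nat.card (b ⁻¹' {y}) - Nat.card (orbitRel.Quotient D Ω) + 1) := by
  have := Fintype.ofFinite (orbitRel.Quotient D Ω)
  have hsurj := blockOrbit_surjective b hc.map_eq_top y
  have htwo := hc.card_le_two_mul_card_inf_ker hQ b hN hND
  have hprod := card_orbitwiseCentralizer_inf_ker_le b hc.map_eq_top y
  have hle : φ.ker ⊓ N ≤ orbitwiseCentralizer D Ω ⊓ φ.ker := fun g hg => ⟨hN hg.2, hg.1⟩
  have hpos : 0 < 2 ^ (Nat.card (b ⁻¹' {y}) - Nat.card (orbitRel.Quotient D Ω)) := by positivity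
  rw [pow_succ]
  by_cases hc2 : c ^ 2 = 1
  · rw [hc.eq_bot_of_sq_eq_one b hc2 hN hND, card_bot]
    omega
  by_cases hc4 : (c ^ 2) ^ 2 = 1
  · have hlt : φ.ker ⊓ N < orbitwiseCentralizer D Ω ⊓ φ.ker := by
      refine lt_of_le_of_ne hle fun heq => hc2 ?_
      have hker : c ^ 2 ∈ φ.ker := by
        rw [MonoidHom.mem_ker, map_pow, pow_two, hc.map_mul_self]
      have hcN : c ^ 2 ∈ φ.ker ⊓ N := heq ▸ ⟨hc.sq_mem_orbitwiseCentralizer hc4, hker⟩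
      rw [← mem_bot, ← hND]
      exact ⟨hcN.2, pow_mem hc.mem 2⟩
    have := two_mul_card_le_of_lt hlt
    have := prod_card_fiber_le hsurj
    omega
  · obtain ⟨p, hp⟩ := hc.exists_three_le_card_fiber b hc4 y
    have := card_le_of_le hle
    have := prod_card_fiber_lt hsurj hp
    omega

end IsCoveringRotation

-- The string `x` permutes the `D`-orbits, of which there are at most as many as points in a block;
-- the elements fixing every `D`-orbit contribute the difference of these two numbers.
theorem card_lt_card_block [IsCancelSMul Q β] [IsPretransitive Q β] [FaithfulSMul Γ Ω]
    [Finite Γ] [Finite Ω] [Nonempty Ω] {ι : Type*} [LinearOrder ι] [Finite ι] {x : ι → Γ}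
    (hstring : IsString x) (hindep : IndependentFamily x) (hc : IsCoveringRotation φ D c)
    (hQ : Nat.card Q = 4) (b : Ω →ₑ[φ] β) (hcent : ∀ i, x i ∈ centralizer (D : Set Γ))
    (hint : closure (Set.range x) ⊓ D = ⊥) (y : β) : Nat.card ι < Nat.card (b ⁻¹' {y}) := by
  let x' (i : ι) : centralizer (D : Set Γ) := ⟨x i, hcent i⟩
  let ψ := centralizerOrbitHom D Ω
  have hstring' : IsString x' := fun _ _ _ hij hjk => Subtype.ext (hstring hij hjk).eq
  have hindep' : IndependentFamily x' := .of_map (Subgroup.subtype _) hindep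
  have hker : IndepBound (ψ.ker ⊓ closure (Set.range x') : Subgroup _)
      (Nat.card (b ⁻¹' {y}) - Nat.card (orbitRel.Quotient D Ω)) := by
    let N := (ψ.ker ⊓ closure (Set.range x')).map (Subgroup.subtype _)
    have hN : N ≤ orbitwiseCentralizer D Ω := map_mono inf_le_left
    have hND : N ⊓ D = ⊥ := by
      refine le_bot_iff.1 (hint ▸ inf_le_inf_right D ?_)
      refine (map_mono inf_le_right).trans ?_
      rw [MonoidHom.map_closure, ← Set.range_comp]
      exact le_rfl
    have hcard : Nat.card N = Nat.card (ψ.ker ⊓ closure (Set.range x') : Subgroup _) :=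
      (Nat.card_congr (equivMapOfInjective _ _ (subtype_injective _)).toEquiv).symm
    refine IndepBound.of_card_lt ?_
    rw [← hcard]
    exact hc.card_lt_two_pow hQ b hN hND y
  have horbits : Nat.card (orbitRel.Quotient D Ω) ≤ Nat.card (b ⁻¹' {y}) :=
    Nat.card_le_card_of_surjective _ (blockOrbit_surjective b hc.map_eq_top y)
  have : Nonempty (orbitRel.Quotient D Ω) := ⟨Quotient.mk'' (Classical.arbitrary Ω)⟩
  have hpos : 0 < Nat.card (orbitRel.Quotient D Ω) := Nat.card_pos
  have := ((hstring'.map ψ).deletionBound_perm.of_ker hker).card_le hindep'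
  omega

end Blocks

section Klein

open MulAction

variable {κ Γ Q Ω β : Type*} [Group Γ] [Group Q] [MulAction Γ Ω] [MulAction Q β]

/-- The intersection property of string C-groups: the subgroups generated by subfamilies intersect
as the index sets do. -/
def IntersectionProperty (x : κ → Γ) : Prop :=
  ∀ J K : Set κ, closure (x '' J) ⊓ closure (x '' K) = closure (x '' (J ∩ K))

namespace IntersectionProperty

variable {x : κ → Γ}

theorem of_map {f : Γ →* Q} (hf : Function.Injective f) (h : IntersectionProperty (f ∘ x)) :
    IntersectionProperty x := by
  intro J K
  apply map_injective hf
  simp only [map_inf _ _ _ hf, MonoidHom.map_closure, ← Set.image_comp]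
  exact h J K

theorem inf_eq_bot (h : IntersectionProperty x) {J K : Set κ} (hJK : Disjoint J K) :
    closure (x '' J) ⊓ closure (x '' K) = ⊥ := by
  rw [h, hJK.inter_eq, Set.image_empty, Subgroup.closure_empty]

theorem independentFamily (h : IntersectionProperty x) (hx : ∀ i, x i ≠ 1) :
    IndependentFamily x := by
  intro i hi
  apply hx i
  rw [← mem_bot, ← h.inf_eq_bot (disjoint_compl_left (a := {i}))]
  exact ⟨hi, subset_closure ⟨i, rfl, rfl⟩⟩

end IntersectionProperty

theorem exists_eq_pair_of_isKleinFour [IsKleinFour Q] [Finite κ] {π : κ → Q} {L : Set κ}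
    (hgen : closure (π '' L) = ⊤) (hind : IndependentFamily fun l : L => π l) :
    ∃ l₁ l₂, L = {l₁, l₂} := by
  have : Finite Q := Nat.finite_of_card_ne_zero (by rw [IsKleinFour.card_four]; norm_num)
  have hcard : L.ncard ≤ 2 :=
    (IndepBound.of_card_lt (by rw [IsKleinFour.card_four]; norm_num)).card_le hind
  have hne : L ≠ ∅ := by
    rintro rfl
    rw [Set.image_empty, Subgroup.closure_empty, ← zpowers_one_eq_bot] at hgen
    exact zpowers_ne_top_of_isKleinFour 1 hgen
  rw [← Set.nonempty_iff_ne_empty, ← Set.ncard_pos] at hne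
  obtain h | h : L.ncard = 1 ∨ L.ncard = 2 := by omega
  · obtain ⟨l, rfl⟩ := Set.ncard_eq_one.1 h
    exact ⟨l, l, (Set.pair_eq_singleton l).symm⟩
  · obtain ⟨l₁, l₂, -, rfl⟩ := Set.ncard_eq_two.1 h
    exact ⟨l₁, l₂, rfl⟩

theorem ncard_commuting_lt_card_block [IsKleinFour Q] [IsCancelSMul Q β] [IsPretransitive Q β]
    [FaithfulSMul Γ Ω] [Finite Γ] [Finite Ω] [Nonempty Ω] [LinearOrder κ] [Finite κ]
    {φ : Γ →* Q} (b : Ω →ₑ[φ] β) {x : κ → Γ} (hstring : IsString x)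
    (hint : IntersectionProperty x) (hmul : ∀ i, x i * x i = 1) (hne : ∀ i, x i ≠ 1) {L : Set κ}
    (hgen : closure (φ ∘ x '' L) = ⊤) (hind : IndependentFamily fun l : L => φ (x l)) (y : β) :
    {i | i ∉ L ∧ ∀ l ∈ L, Commute (x i) (x l)}.ncard < Nat.card (b ⁻¹' {y}) := by
  set C := {i | i ∉ L ∧ ∀ l ∈ L, Commute (x i) (x l)}
  have hc : ∃ c, IsCoveringRotation φ (closure (x '' L)) c := by
    obtain ⟨l₁, l₂, rfl⟩ := exists_eq_pair_of_isKleinFour hgen hind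
    rw [Set.image_comp, ← MonoidHom.map_closure, Set.image_pair] at hgen
    rw [Set.image_pair]
    exact ⟨_, isCoveringRotation_mul (hmul l₁) (hmul l₂) hgen⟩
  obtain ⟨c, hc⟩ := hc
  have hcent : closure (x '' C) ≤ centralizer (closure (x '' L)) := by
    apply closure_le_centralizer_closure
    rintro _ ⟨i, hi, rfl⟩ _ ⟨l, hl, rfl⟩
    exact hi.2 l hl
  have hbot : closure (x '' C) ⊓ closure (x '' L) = ⊥ :=
    hint.inf_eq_bot (Set.disjoint_left.2 fun i hi => hi.1)
  rw [Set.image_eq_range] at hbot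
  exact card_lt_card_block (x := fun i : C => x i) (fun _ _ _ hij hjk => hstring hij hjk)
    ((hint.independentFamily hne).comp Subtype.coe_injective) hc IsKleinFour.card_four b
    (fun i => hcent (subset_closure (Set.mem_image_of_mem x i.2))) hbot y

theorem isCancelSMul_of_card_eq [Finite Q] [IsPretransitive Q β] (h : Nat.card Q = Nat.card β) :
    IsCancelSMul Q β where
  left_cancel' := fun q _ _ => smul_left_cancel q
  right_cancel' := fun _ _ y hqr =>
    ((Nat.bijective_iff_surjective_and_card _).2 ⟨surjective_smul Q y, h⟩).1 hqr

theorem isKleinFour_of_sq_eq_one (hcard : Nat.card Q = 4) (hsq : ∀ q : Q, q ^ 2 = 1) :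
    IsKleinFour Q := by
  refine ⟨hcard, ?_⟩
  refine ((Nat.dvd_prime Nat.prime_two).1
    (Monoid.exponent_dvd_iff_forall_pow_eq_one.2 hsq)).resolve_left fun h => ?_
  rw [Monoid.exp_eq_one_iff] at h
  rw [Nat.card_of_subsingleton (1 : Q)] at hcard
  omega

theorem exists_blockHom {ρ : κ → Equiv.Perm Ω} {π : κ → Equiv.Perm β} {b : Ω → β}
    (hb : Function.Surjective b) (hπ : ∀ i z, b (ρ i z) = π i (b z)) :
    ∃ φ : closure (Set.range ρ) →* closure (Set.range π), ∀ g z, b (g • z) = φ g • b z := by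
  have hex : ∀ g : closure (Set.range ρ), ∃ v : closure (Set.range π),
      ∀ z, b (g • z) = v • b z := by
    rintro ⟨g, hg⟩
    induction hg using closure_induction with
    | mem g hg =>
      obtain ⟨i, rfl⟩ := hg
      exact ⟨⟨π i, subset_closure ⟨i, rfl⟩⟩, hπ i⟩
    | one => exact ⟨1, fun _ => rfl⟩
    | mul g h _ _ ihg ihh =>
      obtain ⟨⟨v, hv⟩, ⟨w, hw⟩⟩ := And.intro ihg ihh
      exact ⟨v * w, fun z => (hv _).trans (congrArg (v • ·) (hw z))⟩
    | inv g _ ih =>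
      obtain ⟨v, hv⟩ := ih
      refine ⟨v⁻¹, fun z => ?_⟩
      rw [eq_inv_smul_iff, ← hv]
      exact congrArg b (g.apply_symm_apply z)
  choose φ hφ using hex
  refine ⟨MonoidHom.mk' φ fun g h => eq_of_smul_eq_smul fun y : β => ?_, hφ⟩
  obtain ⟨z, rfl⟩ := hb y
  rw [← hφ, mul_smul, hφ, hφ, mul_smul]

theorem ncard_commuting_lt_card_fiber [Finite Ω] [Nonempty Ω] [LinearOrder κ] [Finite κ]
    {ρ : κ → Equiv.Perm Ω} [IsPretransitive (closure (Set.range ρ)) Ω]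
    (hstring : IsString ρ) (hint : IntersectionProperty ρ) (hmul : ∀ i, ρ i * ρ i = 1)
    (hne : ∀ i, ρ i ≠ 1) {π : κ → Equiv.Perm β} {b : Ω → β} (hb : Function.Surjective b)
    (hπ : ∀ i z, b (ρ i z) = π i (b z)) [IsKleinFour (closure (Set.range π))]
    (hβ : Nat.card β = 4) {L : Set κ} (hgen : closure (π '' L) = closure (Set.range π))
    (hind : IndependentFamily fun l : L => π l) (y : β) :
    {i | i ∉ L ∧ ∀ l ∈ L, Commute (ρ i) (ρ l)}.ncard < Nat.card (b ⁻¹' {y}) := by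
  have : Finite β := .of_surjective b hb
  obtain ⟨φ, hφ⟩ := exists_blockHom hb hπ
  let x (i : κ) : closure (Set.range ρ) := ⟨ρ i, subset_closure ⟨i, rfl⟩⟩
  let b' : Ω →ₑ[φ] β := ⟨b, hφ⟩
  have hφx : ∀ i, (φ (x i) : Equiv.Perm β) = π i := fun i => Equiv.ext <| hb.forall.2 fun z =>
    (hφ (x i) z).symm.trans (hπ i z)
  have hpretrans : IsPretransitive (closure (Set.range π)) β :=
    .of_surjective_map (f := b') hb inferInstance
  have hcancel : IsCancelSMul (closure (Set.range π)) β :=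
    isCancelSMul_of_card_eq (by rw [IsKleinFour.card_four, hβ])
  have hgen' : closure (φ ∘ x '' L) = ⊤ := by
    apply map_injective (subtype_injective _)
    rw [MonoidHom.map_closure, ← Set.image_comp, ← MonoidHom.range_eq_map, range_subtype]
    exact (congrArg (fun f => Subgroup.closure (f '' L)) (funext hφx)).trans hgen
  have hind' : IndependentFamily fun l : L => φ (x l) :=
    .of_map (Subgroup.subtype _) (by simpa only [Function.comp_def, subtype_apply, hφx] using hind)
  have hlt := ncard_commuting_lt_card_block b' (x := x)
    (fun _ _ _ hij hjk => Subtype.ext (hstring hij hjk).eq)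
    (.of_map (subtype_injective _) hint) (fun i => Subtype.ext (hmul i))
    (fun i h => hne i (congrArg Subtype.val h)) hgen' hind' y
  have hcomm : ∀ i l, Commute (x i) (x l) ↔ Commute (ρ i) (ρ l) := fun i l => Subtype.ext_iff
  simp only [hcomm] at hlt
  exact hlt

end Klein

namespace IsStringC

variable {n r : ℕ} {ρ : Fin r → Equiv.Perm (Fin n)}

theorem mul_self (h : IsStringC ρ) (i : Fin r) : ρ i * ρ i = 1 := by
  rw [← pow_two, ← h.1.1 i, pow_orderOf_eq_one]

theorem ne_one (h : IsStringC ρ) (i : Fin r) : ρ i ≠ 1 := by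
  intro hi
  have := h.1.1 i
  rw [hi, orderOf_one] at this
  omega

theorem isString (h : IsStringC ρ) : IsString ρ := by
  intro i j k hij hjk
  have hsq := h.1.2 i k (by rw [lt_abs]; right; omega)
  rw [pow_two] at hsq
  have hinv : ∀ l, (ρ l)⁻¹ = ρ l := fun l => inv_eq_of_mul_eq_one_right (h.mul_self l)
  rw [Commute, SemiconjBy, eq_inv_of_mul_eq_one_left hsq, mul_inv_rev, hinv, hinv]

theorem intersectionProperty (h : IsStringC ρ) : IntersectionProperty ρ :=
  h.2

end IsStringC

theorem stmt10 {n r : ℕ} (hn : n = n / 4 * 4) (hk : 2 ≤ n / 4)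
    (ρ : Fin r → Equiv.Perm (Fin n)) (hstring : IsStringC ρ)
    (htrans : MulAction.IsPretransitive ↥(Subgroup.closure (Set.range ρ)) (Fin n))
    -- the block map b : m = 4 blocks of size k = n/4
    (b : Fin n → Fin 4) (hbsurj : Function.Surjective b)
    (hfib : ∀ c : Fin 4, Set.ncard {x | b x = c} = n / 4)
    (hcompat : ∀ g ∈ Subgroup.closure (Set.range ρ), ∀ x y : Fin n,
      b x = b y → b (g x) = b (g y))
    -- π l is the induced block permutation φ (ρ l)
    (π : Fin r → Equiv.Perm (Fin 4))
    (hπ : ∀ (l : Fin r) (x : Fin n), b (ρ l x) = π l (b x))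
    -- L generates the image of φ independently
    (L : Set (Fin r))
    (hLgen : Subgroup.closure (π '' L) = Subgroup.closure (Set.range π))
    (hLind : ∀ l ∈ L, π l ∉ Subgroup.closure (π '' (L \ {l})))
    -- the block action is isomorphic to the Klein four group
    (hcard : Nat.card ↥(Subgroup.closure (Set.range π)) = 4)
    (hsq : ∀ g ∈ Subgroup.closure (Set.range π), g ^ 2 = 1) :
    {i : Fin r | i ∉ L ∧ ∀ l ∈ L, Commute (ρ i) (ρ l)}.ncard ≤ n / 4 - 1 := by
  have : Nonempty (Fin n) := ⟨⟨0, by omega⟩⟩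
  have : IsKleinFour (closure (Set.range π)) :=
    isKleinFour_of_sq_eq_one hcard fun g => Subtype.ext (hsq g g.2)
  have hlt := ncard_commuting_lt_card_fiber hstring.isString hstring.intersectionProperty
    hstring.mul_self hstring.ne_one hbsurj hπ (Nat.card_fin 4) hLgen
    (independentFamily_restrict_iff.2 hLind) 0
  have hblock : Nat.card (b ⁻¹' {0}) = n / 4 := hfib 0
  omega
end
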